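/- arXiv:2401.16941 — 4 statements merged into one kernel-verified Lean document; each statement's English description precedes it below -/
import Mathlib

section
/- Let K be a field of characteristic 0. For every pair (ρ, σ) ∈ ℝ² with ρ + σ ≥ 0, there exists a degree map u on the Weyl algebra A_1(K) over K with u(p) = ρ and u(q) = σ. -/
noncomputable section

/-- The defining relation of the Weyl algebra: `q p = p q + 1`
(with `false` playing the role of `p` and `true` that of `q`). -/
inductive WeylRel (K : Type*) [Field K] : FreeAlgebra K Bool → FreeAlgebra K Bool → Prop
  | rel : WeylRel K (FreeAlgebra.ι K true * FreeAlgebra.ι K false)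
      (FreeAlgebra.ι K false * FreeAlgebra.ι K true + 1)

/-- The Weyl algebra `A₁(K)`: the quotient of the free associative unital `K`-algebra on two
generators `p`, `q` by the two-sided ideal generated by `q p - p q - 1`. -/
def Weyl (K : Type*) [Field K] := RingQuot (WeylRel K)

instance (K : Type*) [Field K] : Ring (Weyl K) :=
  inferInstanceAs (Ring (RingQuot (WeylRel K)))

instance (K : Type*) [Field K] : Algebra K (Weyl K) :=
  inferInstanceAs (Algebra K (RingQuot (WeylRel K)))

/-- The generator `p` of the Weyl algebra. -/
def Wp (K : Type*) [Field K] : Weyl K :=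
  RingQuot.mkAlgHom K (WeylRel K) (FreeAlgebra.ι K false)

/-- The generator `q` of the Weyl algebra. -/
def Wq (K : Type*) [Field K] : Weyl K :=
  RingQuot.mkAlgHom K (WeylRel K) (FreeAlgebra.ι K true)

/-- A degree map on a ring `R`: a function `u : R → ℝ ∪ {-∞}` with
`u(fg) = u(f) + u(g)`, `u(f+g) ≤ max (u f) (u g)`, and `u f = -∞ ↔ f = 0`. -/
structure IsDegreeMap {R : Type*} [Ring R] (u : R → WithBot ℝ) : Prop where
  map_mul : ∀ f g, u (f * g) = u f + u g
  add_le : ∀ f g, u (f + g) ≤ max (u f) (u g)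
  bot_iff : ∀ f, u f = ⊥ ↔ f = 0

end

/-!
Because `q p = p q + 1`, the monomials `pⁱ qʲ` form a basis of the Weyl algebra, and the product of
two of them is the monomial with the summed exponents plus monomials obtained from it by lowering
both exponents equally. When `ρ + σ ≥ 0`, each such lowering does not increase the weight
`ρ i + σ j`, and it is strict once ties are broken lexicographically in `(i, j)`. Hence the leading
exponent for this refined order is additive on products, the leading coefficients being multiplied
in a domain. The leading exponent attains the largest weight in the support, so the supremum
`v_{ρ,σ}` of the weights over the support is a degree map.
-/

open Module

section LeadingIndex

variable {ι κ Γ Δ K M N : Type*} [Semiring K] [AddCommMonoid M] [Module K M]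
  [AddCommMonoid N] [Module K N]

/-- `a` is the leading index of `f` in the basis `b`: it lies in the support of `f`, and every
other index of the support has strictly smaller `D`-value. Strictness makes the notion meaningful
without assuming that `D` is injective. -/
structure IsLeadingIndex [LT Γ] (b : Basis ι K M) (D : ι → Γ) (f : M) (a : ι) : Prop where
  repr_ne_zero : b.repr f a ≠ 0
  lt_of_repr_ne_zero : ∀ i ≠ a, b.repr f i ≠ 0 → D i < D a

theorem isLeadingIndex_basis [LT Γ] [Nontrivial K] (b : Basis ι K M) (D : ι → Γ) (i : ι) :
    IsLeadingIndex b D (b i) i where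
  repr_ne_zero := by simp
  lt_of_repr_ne_zero j hj h := absurd (by simp [hj.symm]) h

theorem exists_isLeadingIndex [LinearOrder Γ] (b : Basis ι K M) {D : ι → Γ}
    (hD : Function.Injective D) {f : M} (hf : f ≠ 0) : ∃ a, IsLeadingIndex b D f a := by
  have hsupp : (b.repr f).support.Nonempty := by simpa using hf
  obtain ⟨a, ha, hmax⟩ := (b.repr f).support.exists_max_image D hsupp
  exact ⟨a, Finsupp.mem_support_iff.mp ha, fun i hia hi =>
    (hmax i (Finsupp.mem_support_iff.mpr hi)).lt_of_ne (hD.ne hia)⟩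

theorem repr_map_apply (b : Basis ι K M) (b' : Basis κ K N) (T : M →ₗ[K] N) (f : M) (k : κ) :
    b'.repr (T f) k = (b.repr f).sum fun i c => c * b'.repr (T (b i)) k := by
  conv_lhs => rw [← b.linearCombination_repr f]
  simp [Finsupp.linearCombination_apply, Finsupp.sum, map_sum]

namespace IsLeadingIndex

variable [Preorder Γ] [Preorder Δ] {b : Basis ι K M} {b' : Basis κ K N} {D : ι → Γ} {D' : κ → Δ}
  {f : M} {a : ι}

theorem le_of_repr_ne_zero (h : IsLeadingIndex b D f a) {i : ι} (hi : b.repr f i ≠ 0) :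
    D i ≤ D a := by
  rcases eq_or_ne i a with rfl | hia
  · exact le_rfl
  · exact (h.lt_of_repr_ne_zero i hia hi).le

theorem repr_eq_zero_of_lt (h : IsLeadingIndex b D f a) {i : ι} (hi : D a < D i) :
    b.repr f i = 0 :=
  not_not.mp fun hne => (h.le_of_repr_ne_zero hne).not_gt hi

theorem map [NoZeroDivisors K] (hf : IsLeadingIndex b D f a) {T : M →ₗ[K] N} {τ : ι → κ}
    (hτ : ∀ i j, D i < D j → D' (τ i) < D' (τ j))
    (hT : ∀ i, IsLeadingIndex b' D' (T (b i)) (τ i)) :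
    IsLeadingIndex b' D' (T f) (τ a) where
  repr_ne_zero := by
    have hlead : b'.repr (T f) (τ a) = b.repr f a * b'.repr (T (b a)) (τ a) := by
      rw [repr_map_apply b]
      refine Finsupp.sum_eq_single a (fun i hi hia => ?_) (by simp)
      rw [(hT i).repr_eq_zero_of_lt (hτ i a (hf.lt_of_repr_ne_zero i hia hi)), mul_zero]
    exact hlead ▸ mul_ne_zero hf.repr_ne_zero (hT a).repr_ne_zero
  lt_of_repr_ne_zero k hk hne := by
    rw [repr_map_apply b] at hne
    obtain ⟨i, hi, hik⟩ := Finset.exists_ne_zero_of_sum_ne_zero hne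
    have hik' := right_ne_zero_of_mul hik
    rcases eq_or_ne i a with rfl | hia
    · exact (hT i).lt_of_repr_ne_zero k hk hik'
    · exact ((hT i).le_of_repr_ne_zero hik').trans_lt
        (hτ i a (hf.lt_of_repr_ne_zero i hia (Finsupp.mem_support_iff.mp hi)))

end IsLeadingIndex

end LeadingIndex

section Algebra

variable {ι Γ K R : Type*} [CommSemiring K] [Semiring R] [Algebra K R]

theorem submodule_eq_top_of_adjoin_eq_top {s : Set R} (hs : Algebra.adjoin K s = ⊤)
    {S : Submodule K R} (one_mem : 1 ∈ S) (mul_mem : ∀ x ∈ s, ∀ y ∈ S, x * y ∈ S) : S = ⊤ := by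
  rw [← top_le_iff, ← Algebra.top_toSubmodule, ← hs, Algebra.adjoin_eq_span, Submodule.span_le]
  intro x hx
  induction hx using Submonoid.closure_induction_left with
  | one => exact one_mem
  | mul_left x hx y _ hy => exact mul_mem x hx y hy

variable {b : Basis ι K R} [AddMonoid ι]

theorem IsLeadingIndex.pow_mul [LT Γ] {D : ι → Γ} {x : R} {d : ι}
    (hx : ∀ f a, IsLeadingIndex b D f a → IsLeadingIndex b D (x * f) (d + a)) {f : R} {a : ι}
    (hf : IsLeadingIndex b D f a) (n : ℕ) : IsLeadingIndex b D (x ^ n * f) (n • d + a) := by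
  induction n with
  | zero => simpa using hf
  | succ n ih => simpa only [pow_succ', succ_nsmul', mul_assoc, add_assoc] using hx _ _ ih

variable [AddCommMonoid Γ] [PartialOrder Γ] [IsOrderedCancelAddMonoid Γ] [NoZeroDivisors K]
  {D : ι →+ Γ}

theorem IsLeadingIndex.mul (hb : ∀ i j, IsLeadingIndex b D (b i * b j) (i + j)) {f g : R} {i j : ι}
    (hf : IsLeadingIndex b D f i) (hg : IsLeadingIndex b D g j) :
    IsLeadingIndex b D (f * g) (i + j) := by
  have hbasis_mul (k : ι) : IsLeadingIndex b D (b k * g) (k + j) :=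
    hg.map (T := LinearMap.mulLeft K (b k)) (fun _ _ h => by simpa using h) (hb k)
  exact hf.map (T := LinearMap.mulRight K g) (τ := (· + j)) (fun _ _ h => by simpa using h)
    hbasis_mul

end Algebra

section WeightedDegree

/-- The largest weight `w i` of a basis vector `b i` occurring in `f`, and `⊥` for `f = 0`.
For the basis `pⁱ qʲ` of the Weyl algebra and the weight `ρ i + σ j` it is `v_{ρ,σ}`. -/
noncomputable def weightedDegree {ι Ω K M : Type*} [LinearOrder Ω] [Semiring K] [AddCommMonoid M]
    [Module K M] (b : Basis ι K M) (w : ι → Ω) (f : M) : WithBot Ω :=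
  (b.repr f).support.sup fun i => (w i : WithBot Ω)

section Module

variable {ι Γ Ω K M : Type*} [LinearOrder Ω] [Semiring K] [AddCommMonoid M] [Module K M]
  (b : Basis ι K M) (w : ι → Ω)

theorem weightedDegree_eq_bot_iff {f : M} : weightedDegree b w f = ⊥ ↔ f = 0 := by
  rw [← b.repr.map_eq_zero_iff, ← Finsupp.support_eq_empty, Finset.eq_empty_iff_forall_notMem]
  simp only [weightedDegree, Finset.sup_eq_bot_iff, WithBot.coe_ne_bot, imp_false]

theorem weightedDegree_add_le (f g : M) :
    weightedDegree b w (f + g) ≤ max (weightedDegree b w f) (weightedDegree b w g) := by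
  classical
  rw [weightedDegree, map_add]
  exact (Finset.sup_mono Finsupp.support_add).trans_eq Finset.sup_union

theorem weightedDegree_smul_basis {c : K} (hc : c ≠ 0) (i : ι) :
    weightedDegree b w (c • b i) = w i := by
  simp [weightedDegree, hc]

variable {b w}

theorem IsLeadingIndex.weightedDegree_eq [Preorder Γ] {D : ι → Γ}
    (hw : ∀ i j, D i ≤ D j → w i ≤ w j) {f : M} {a : ι} (hf : IsLeadingIndex b D f a) :
    weightedDegree b w f = w a := by
  refine le_antisymm (Finset.sup_le fun i hi => ?_)
    (Finset.le_sup (f := fun i => (w i : WithBot Ω)) (Finsupp.mem_support_iff.mpr hf.repr_ne_zero))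
  exact WithBot.coe_le_coe.mpr
    (hw i a (hf.le_of_repr_ne_zero (Finsupp.mem_support_iff.mp hi)))

end Module

theorem isDegreeMap_weightedDegree {ι Γ K R : Type*} [CommSemiring K] [NoZeroDivisors K] [Ring R]
    [Algebra K R] [AddMonoid ι] [AddCommMonoid Γ] [LinearOrder Γ] [IsOrderedCancelAddMonoid Γ]
    {b : Basis ι K R} {D : ι →+ Γ} (hD : Function.Injective D)
    (hb : ∀ i j, IsLeadingIndex b D (b i * b j) (i + j))
    {w : ι →+ ℝ} (hw : ∀ i j, D i ≤ D j → w i ≤ w j) : IsDegreeMap (weightedDegree b w) where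
  map_mul f g := by
    rcases eq_or_ne f 0 with rfl | hf
    · simp [(weightedDegree_eq_bot_iff b w).mpr rfl]
    rcases eq_or_ne g 0 with rfl | hg
    · simp [(weightedDegree_eq_bot_iff b w).mpr rfl]
    obtain ⟨i, hi⟩ := exists_isLeadingIndex b hD hf
    obtain ⟨j, hj⟩ := exists_isLeadingIndex b hD hg
    rw [hi.weightedDegree_eq hw, hj.weightedDegree_eq hw, (hi.mul hb hj).weightedDegree_eq hw,
      map_add, WithBot.coe_add]
  add_le := weightedDegree_add_le b w
  bot_iff _ := weightedDegree_eq_bot_iff b w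

end WeightedDegree

namespace Weyl

variable (K : Type*) [Field K]

theorem q_mul_p : Wq K * Wp K = Wp K * Wq K + 1 := by
  have hrel := RingQuot.mkAlgHom_rel K (WeylRel.rel (K := K))
  rw [map_mul, map_add, map_mul, map_one] at hrel
  exact hrel

theorem adjoin_p_q : Algebra.adjoin K {Wp K, Wq K} = ⊤ := by
  let π : FreeAlgebra K Bool →ₐ[K] Weyl K := RingQuot.mkAlgHom K (WeylRel K)
  have hπ : Function.Surjective π := RingQuot.mkAlgHom_surjective K (WeylRel K)
  have himage : π '' Set.range (FreeAlgebra.ι K) = {Wp K, Wq K} := by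
    rw [← Set.range_comp, Bool.range_eq]
    rfl
  rw [← himage, ← AlgHom.map_adjoin, FreeAlgebra.adjoin_range_ι, Algebra.map_top]
  exact (AlgHom.range_eq_top π).mpr hπ

/-- The normally ordered monomial `pⁱ qʲ`, where `a = (i, j)`. -/
def monomial (a : ℕ × ℕ) : Weyl K := Wp K ^ a.1 * Wq K ^ a.2

theorem p_mul_monomial (a : ℕ × ℕ) : Wp K * monomial K a = monomial K ((1, 0) + a) := by
  simp only [monomial, Prod.fst_add, Prod.snd_add, zero_add, pow_add, pow_one, mul_assoc]

theorem q_mul_p_pow (n : ℕ) :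
    Wq K * Wp K ^ n = Wp K ^ n * Wq K + (n : K) • Wp K ^ (n - 1) := by
  induction n with
  | zero => simp
  | succ n ih =>
    have hpow : (n : K) • (Wp K ^ (n - 1) * Wp K) = (n : K) • Wp K ^ n := by
      cases n <;> simp [pow_succ]
    calc Wq K * Wp K ^ (n + 1)
        = Wp K ^ n * (Wq K * Wp K) + (n : K) • (Wp K ^ (n - 1) * Wp K) := by
          rw [pow_succ, ← mul_assoc, ih, add_mul, mul_assoc, smul_mul_assoc]
      _ = Wp K ^ (n + 1) * Wq K + ((n + 1 : ℕ) : K) • Wp K ^ (n + 1 - 1) := by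
          rw [q_mul_p, hpow, mul_add, mul_one, ← mul_assoc, ← pow_succ, Nat.add_sub_cancel,
            Nat.cast_succ, add_smul, one_smul, add_assoc, add_comm (Wp K ^ n)]

theorem q_mul_monomial (a : ℕ × ℕ) :
    Wq K * monomial K a = monomial K ((0, 1) + a) + (a.1 : K) • monomial K (a.1 - 1, a.2) := by
  simp only [monomial, Prod.fst_add, Prod.snd_add, zero_add, pow_add, pow_one]
  rw [← mul_assoc, q_mul_p_pow, add_mul, smul_mul_assoc, mul_assoc]

theorem span_range_monomial : Submodule.span K (Set.range (monomial K)) = ⊤ := by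
  have monomial_mem (a : ℕ × ℕ) : monomial K a ∈ Submodule.span K (Set.range (monomial K)) :=
    Submodule.subset_span ⟨a, rfl⟩
  refine submodule_eq_top_of_adjoin_eq_top (adjoin_p_q K)
    (by simpa [monomial] using monomial_mem 0) ?_
  have mul_mem (x : Weyl K)
      (hx : ∀ a, x * monomial K a ∈ Submodule.span K (Set.range (monomial K))) :
      ∀ y ∈ Submodule.span K (Set.range (monomial K)),
        x * y ∈ Submodule.span K (Set.range (monomial K)) :=
    (Submodule.map_span_le (LinearMap.mulLeft K x) _ _).mpr (Set.forall_mem_range.mpr hx)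
      |> Submodule.map_le_iff_le_comap.mp
  rintro x (rfl | rfl)
  · exact mul_mem _ fun a => p_mul_monomial K a ▸ monomial_mem _
  · exact mul_mem _ fun a => q_mul_monomial K a ▸
      add_mem (monomial_mem _) (Submodule.smul_mem _ _ (monomial_mem _))

/-- The operators by which `p` (`false`) and `q` (`true`) act on coordinate vectors of normally
ordered monomials, read off from `p_mul_monomial` and `q_mul_monomial`. -/
noncomputable def coordOperator : Bool → Module.End K (ℕ × ℕ →₀ K)
  | false => Finsupp.linearCombination K fun a => Finsupp.single ((1, 0) + a) 1
  | true => Finsupp.linearCombination K fun a =>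
      Finsupp.single ((0, 1) + a) 1 + Finsupp.single (a.1 - 1, a.2) (a.1 : K)

theorem coordOperator_true_mul_false :
    coordOperator K true * coordOperator K false =
      coordOperator K false * coordOperator K true + 1 := by
  ext ⟨i, j⟩ : 2
  cases i with
  | zero => simp [coordOperator]
  | succ i => simp [coordOperator, add_comm 1, add_assoc, ← Finsupp.single_add, one_add_one_eq_two]

/-- The left regular representation of the Weyl algebra in the coordinates of normally ordered
monomials, defined before these are known to be linearly independent. -/
noncomputable def coordRep : Weyl K →ₐ[K] Module.End K (ℕ × ℕ →₀ K) :=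
  RingQuot.liftAlgHom K ⟨FreeAlgebra.lift K (coordOperator K), by
    rintro _ _ ⟨⟩
    simpa using coordOperator_true_mul_false K⟩

theorem coordRep_p : coordRep K (Wp K) = coordOperator K false :=
  (RingQuot.liftAlgHom_mkAlgHom_apply _ _ _ _).trans (by simp)

theorem coordRep_q : coordRep K (Wq K) = coordOperator K true :=
  (RingQuot.liftAlgHom_mkAlgHom_apply _ _ _ _).trans (by simp)

theorem coordRep_p_pow_single (i : ℕ) (a : ℕ × ℕ) :
    (coordRep K (Wp K) ^ i) (Finsupp.single a 1) = Finsupp.single ((i, 0) + a) 1 := by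
  induction i with
  | zero => simp [Prod.mk_zero_zero]
  | succ i ih =>
    rw [pow_succ', Module.End.mul_apply, ih, coordRep_p]
    simp [coordOperator, ← add_assoc, add_comm 1]

theorem coordRep_q_pow_single_zero (j : ℕ) :
    (coordRep K (Wq K) ^ j) (Finsupp.single 0 1) = Finsupp.single (0, j) 1 := by
  induction j with
  | zero => simp [Prod.mk_zero_zero]
  | succ j ih =>
    rw [pow_succ', Module.End.mul_apply, ih, coordRep_q]
    simp [coordOperator, add_comm 1]

theorem coordRep_monomial_single_zero (a : ℕ × ℕ) :
    coordRep K (monomial K a) (Finsupp.single 0 1) = Finsupp.single a 1 := by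
  rw [monomial, map_mul, map_pow, map_pow, Module.End.mul_apply, coordRep_q_pow_single_zero,
    coordRep_p_pow_single]
  simp

theorem linearIndependent_monomial : LinearIndependent K (monomial K) := by
  let evalOne : Weyl K →ₗ[K] (ℕ × ℕ →₀ K) :=
    LinearMap.applyₗ (Finsupp.single 0 1) ∘ₗ (coordRep K).toLinearMap
  refine LinearIndependent.of_comp evalOne ?_
  have hcomp : evalOne ∘ monomial K = Finsupp.basisSingleOne (R := K) :=
    funext fun a => by simpa [evalOne] using coordRep_monomial_single_zero K a
  exact hcomp ▸ Basis.linearIndependent _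

/-- The Poincaré–Birkhoff–Witt basis of normally ordered monomials `pⁱ qʲ`. -/
noncomputable def monomialBasis : Basis (ℕ × ℕ) K (Weyl K) :=
  Basis.mk (linearIndependent_monomial K) (span_range_monomial K).ge

theorem monomialBasis_apply (a : ℕ × ℕ) : monomialBasis K a = monomial K a :=
  Basis.mk_apply _ _ a

variable {K}

/-- The weight `ρ i + σ j` of the monomial `pⁱ qʲ`. -/
noncomputable def weight (ρ σ : ℝ) : ℕ × ℕ →+ ℝ :=
  (multiplesHom ℝ ρ).coprod (multiplesHom ℝ σ)

theorem weight_apply (ρ σ : ℝ) (a : ℕ × ℕ) : weight ρ σ a = a.1 • ρ + a.2 • σ := rfl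

/-- The weight with ties broken lexicographically in `(i, j)`. The tie-break makes exponents
totally ordered, and keeps the correction term of `q_mul_monomial` strictly smaller when
`ρ + σ = 0`. -/
noncomputable def lexWeight (ρ σ : ℝ) : ℕ × ℕ →+ ℝ ×ₗ ℕ ×ₗ ℕ where
  toFun a := toLex (weight ρ σ a, toLex a)
  map_zero' := by rw [map_zero]; rfl
  map_add' a c := by rw [map_add]; rfl

theorem lexWeight_injective (ρ σ : ℝ) : Function.Injective (lexWeight ρ σ) := fun _ _ h =>
  congrArg (fun x : ℝ ×ₗ ℕ ×ₗ ℕ => ofLex (ofLex x).2) h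

theorem weight_le_of_lexWeight_le {ρ σ : ℝ} (a c : ℕ × ℕ) (h : lexWeight ρ σ a ≤ lexWeight ρ σ c) :
    weight ρ σ a ≤ weight ρ σ c :=
  Prod.Lex.monotone_fst _ _ h

theorem lexWeight_lt_of_fst_ne_zero {ρ σ : ℝ} (h : 0 ≤ ρ + σ) {a : ℕ × ℕ} (ha : a.1 ≠ 0) :
    lexWeight ρ σ (a.1 - 1, a.2) < lexWeight ρ σ ((0, 1) + a) := by
  obtain ⟨i, j⟩ := a
  obtain ⟨i, rfl⟩ := Nat.exists_eq_add_one_of_ne_zero ha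
  have hweight : weight ρ σ ((0, 1) + (i + 1, j)) = weight ρ σ (i, j) + (ρ + σ) := by
    simp only [weight_apply, Prod.mk_add_mk, nsmul_eq_mul]
    push_cast
    ring
  have htie : toLex (i, j) < toLex ((0, 1) + (i + 1, j)) :=
    Prod.Lex.toLex_lt_toLex.mpr (Or.inl (by simp))
  refine Prod.Lex.toLex_lt_toLex.mpr ?_
  rcases h.lt_or_eq with hpos | hzero
  · exact Or.inl (hweight ▸ lt_add_of_pos_right _ hpos)
  · exact Or.inr ⟨by rw [hweight, ← hzero, add_zero]; rfl, htie⟩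

section

variable {ρ σ : ℝ} {f : Weyl K} {a : ℕ × ℕ}

theorem isLeadingIndex_p_mul (hf : IsLeadingIndex (monomialBasis K) (lexWeight ρ σ) f a) :
    IsLeadingIndex (monomialBasis K) (lexWeight ρ σ) (Wp K * f) ((1, 0) + a) := by
  refine hf.map (T := LinearMap.mulLeft K (Wp K)) (fun _ _ h => by simpa using h) fun c => ?_
  rw [LinearMap.mulLeft_apply, monomialBasis_apply, p_mul_monomial, ← monomialBasis_apply]
  exact isLeadingIndex_basis _ _ _

theorem isLeadingIndex_q_mul_monomial (h : 0 ≤ ρ + σ) (a : ℕ × ℕ) :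
    IsLeadingIndex (monomialBasis K) (lexWeight ρ σ) (Wq K * monomial K a) ((0, 1) + a) := by
  have hrepr : (monomialBasis K).repr (Wq K * monomial K a) =
      Finsupp.single ((0, 1) + a) 1 + Finsupp.single (a.1 - 1, a.2) (a.1 : K) := by
    rw [q_mul_monomial]
    simp [← monomialBasis_apply]
  have hne : (a.1 - 1, a.2) ≠ (0, 1) + a := fun heq => by simpa using congrArg Prod.snd heq
  constructor
  · simp [hrepr, hne]
  · intro c hc hcoeff
    rw [hrepr, Finsupp.add_apply, Finsupp.single_eq_of_ne hc, zero_add,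
      Finsupp.single_apply_ne_zero] at hcoeff
    rw [hcoeff.1]
    exact lexWeight_lt_of_fst_ne_zero h fun ha => hcoeff.2 (by rw [ha, Nat.cast_zero])

theorem isLeadingIndex_q_mul (h : 0 ≤ ρ + σ)
    (hf : IsLeadingIndex (monomialBasis K) (lexWeight ρ σ) f a) :
    IsLeadingIndex (monomialBasis K) (lexWeight ρ σ) (Wq K * f) ((0, 1) + a) := by
  refine hf.map (T := LinearMap.mulLeft K (Wq K)) (fun _ _ h => by simpa using h) fun c => ?_
  rw [LinearMap.mulLeft_apply, monomialBasis_apply]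
  exact isLeadingIndex_q_mul_monomial h c

theorem isLeadingIndex_monomialBasis_mul (h : 0 ≤ ρ + σ) (a c : ℕ × ℕ) :
    IsLeadingIndex (monomialBasis K) (lexWeight ρ σ) (monomialBasis K a * monomialBasis K c)
      (a + c) := by
  have hq_pow := (isLeadingIndex_basis (monomialBasis K) (lexWeight ρ σ) c).pow_mul
    (fun _ _ => isLeadingIndex_q_mul h) a.2
  have hp_pow := hq_pow.pow_mul (fun _ _ => isLeadingIndex_p_mul) a.1
  have hindex : a.1 • (1, 0) + (a.2 • (0, 1) + c) = a + c := by ext <;> simp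
  rwa [hindex, ← mul_assoc, ← monomial, ← monomialBasis_apply] at hp_pow

end

end Weyl

theorem exists_degreeMap_of_add_nonneg_general (K : Type*) [Field K]
    (ρ σ : ℝ) (h : 0 ≤ ρ + σ) :
    ∃ u : Weyl K → WithBot ℝ, IsDegreeMap u ∧
      (∀ c : K, c ≠ 0 → u (algebraMap K (Weyl K) c) = 0) ∧
      u (Wp K) = (ρ : WithBot ℝ) ∧ u (Wq K) = (σ : WithBot ℝ) := by
  have degree_smul (c : K) (hc : c ≠ 0) (a : ℕ × ℕ) :
      weightedDegree (Weyl.monomialBasis K) (Weyl.weight ρ σ) (c • Weyl.monomial K a) =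
        Weyl.weight ρ σ a :=
    Weyl.monomialBasis_apply K a ▸
      weightedDegree_smul_basis (Weyl.monomialBasis K) (Weyl.weight ρ σ) hc a
  refine ⟨weightedDegree (Weyl.monomialBasis K) (Weyl.weight ρ σ),
    isDegreeMap_weightedDegree (Weyl.lexWeight_injective ρ σ)
      (Weyl.isLeadingIndex_monomialBasis_mul h) Weyl.weight_le_of_lexWeight_le,
    fun c hc => ?_, ?_, ?_⟩
  · simpa [Weyl.monomial, Algebra.algebraMap_eq_smul_one] using degree_smul c hc 0
  · simpa [Weyl.monomial, Weyl.weight_apply] using degree_smul 1 one_ne_zero (1, 0)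
  · simpa [Weyl.monomial, Weyl.weight_apply] using degree_smul 1 one_ne_zero (0, 1)

/-- for every `(ρ, σ) ∈ ℝ²` with `ρ + σ ≥ 0` there exists a degree map `u`
on the Weyl algebra `A₁(K)` over `K` with `u(p) = ρ` and `u(q) = σ`. -/
theorem exists_degreeMap_of_add_nonneg (K : Type*) [Field K] [CharZero K]
    (ρ σ : ℝ) (h : 0 ≤ ρ + σ) :
    ∃ u : Weyl K → WithBot ℝ, IsDegreeMap u ∧
      (∀ c : K, c ≠ 0 → u (algebraMap K (Weyl K) c) = 0) ∧
      u (Wp K) = (ρ : WithBot ℝ) ∧ u (Wq K) = (σ : WithBot ℝ) := by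
  exact exists_degreeMap_of_add_nonneg_general K ρ σ h
end

section
/- Let L be a field and let · be a deformed Laurent series product on L((T^{-1})). Then every nonzero element of L((T^{-1})) has a two-sided multiplicative inverse (so L((T^{-1})) with this product is a division ring), and the inversion map z ↦ z^{-1} is continuous with respect to the topology induced by the standard degree map. -/
noncomputable section

open scoped Classical

/-- The generalized binomial coefficient `binom n k` for an integer `n` and natural `k`;
it equals `n (n-1) ⋯ (n-k+1) / k!` (an integer). -/
def zbinom (n : ℤ) (k : ℕ) : ℤ :=
  if 0 ≤ n then (n.toNat.choose k : ℤ) else (-1) ^ k * (((k : ℤ) - 1 - n).toNat.choose k : ℤ)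

/-- The generalized binomial coefficient `a (a-1) ⋯ (a-k+1) / k!` in a field `K`
(of characteristic zero in all uses). -/
def gbinom {K : Type*} [Field K] (a : K) (k : ℕ) : K :=
  (∏ i ∈ Finset.range k, (a - (i : K))) / (k.factorial : K)

/-- Inverse Laurent series over `L`: formal sums `Σ_{i ∈ ℤ} a_i T^i` whose support is
bounded above. -/
structure InvLaurent (L : Type*) [Zero L] where
  coeff : ℤ → L
  bdd' : ∃ N : ℤ, ∀ i : ℤ, N < i → coeff i = 0

namespace InvLaurent

variable {L : Type*} [Field L]

@[ext] theorem ext {f g : InvLaurent L} (h : ∀ i, f.coeff i = g.coeff i) : f = g := by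
  cases f; cases g
  simp only [mk.injEq]
  funext i; exact h i

instance : Zero (InvLaurent L) := ⟨⟨fun _ => 0, ⟨0, fun _ _ => rfl⟩⟩⟩

instance : Add (InvLaurent L) :=
  ⟨fun f g => ⟨fun i => f.coeff i + g.coeff i, by
    obtain ⟨N, hN⟩ := f.bdd'; obtain ⟨M, hM⟩ := g.bdd'
    exact ⟨max N M, fun i hi => by
      show f.coeff i + g.coeff i = 0
      rw [hN i (lt_of_le_of_lt (le_max_left _ _) hi),
        hM i (lt_of_le_of_lt (le_max_right _ _) hi), add_zero]⟩⟩⟩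

instance : Neg (InvLaurent L) :=
  ⟨fun f => ⟨fun i => -f.coeff i, by
    obtain ⟨N, hN⟩ := f.bdd'
    exact ⟨N, fun i hi => by show -f.coeff i = 0; rw [hN i hi, neg_zero]⟩⟩⟩

@[simp] lemma coeff_zero (i : ℤ) : (0 : InvLaurent L).coeff i = 0 := rfl
@[simp] lemma coeff_add (f g : InvLaurent L) (i : ℤ) :
    (f + g).coeff i = f.coeff i + g.coeff i := rfl
@[simp] lemma coeff_neg (f : InvLaurent L) (i : ℤ) : (-f).coeff i = -f.coeff i := rfl

instance : AddCommGroup (InvLaurent L) where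
  add_assoc f g h := by ext i; simp [add_assoc]
  zero_add f := by ext i; simp
  add_zero f := by ext i; simp
  neg_add_cancel f := by ext i; simp
  add_comm f g := by ext i; simp [add_comm]
  nsmul := nsmulRec
  zsmul := zsmulRec

@[simp] lemma coeff_sub (f g : InvLaurent L) (i : ℤ) :
    (f - g).coeff i = f.coeff i - g.coeff i := by
  rw [sub_eq_add_neg, coeff_add, coeff_neg, sub_eq_add_neg]

/-- The series `a T^n`. -/
def single (n : ℤ) (a : L) : InvLaurent L :=
  ⟨fun i => if i = n then a else 0, ⟨n, fun i hi => if_neg (by omega)⟩⟩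

/-- The series `T^n`. -/
def T (L : Type*) [Field L] (n : ℤ) : InvLaurent L := single n 1

/-- Coefficientwise multiplication by a scalar `b ∈ L` on the left. -/
def lsmul (b : L) (f : InvLaurent L) : InvLaurent L :=
  ⟨fun i => b * f.coeff i, by
    obtain ⟨N, hN⟩ := f.bdd'
    exact ⟨N, fun i hi => by show b * f.coeff i = 0; rw [hN i hi, mul_zero]⟩⟩

/-- The standard degree map, with values in `ℤ ∪ {-∞}`. -/
def deg (f : InvLaurent L) : WithBot ℤ :=
  if f = 0 then ⊥ else ↑(sSup {i : ℤ | f.coeff i ≠ 0})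

lemma deg_eq_bot_iff (f : InvLaurent L) : deg f = ⊥ ↔ f = 0 := by
  unfold deg
  split
  · simpa
  · simp_all

lemma support_nonempty {f : InvLaurent L} (hf : f ≠ 0) :
    {i : ℤ | f.coeff i ≠ 0}.Nonempty := by
  by_contra h
  rw [Set.not_nonempty_iff_eq_empty] at h
  apply hf
  ext i
  have : i ∉ ({i : ℤ | f.coeff i ≠ 0}) := by rw [h]; exact Set.notMem_empty i
  simpa using this

lemma support_bddAbove (f : InvLaurent L) : BddAbove {i : ℤ | f.coeff i ≠ 0} := by
  obtain ⟨N, hN⟩ := f.bdd'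
  exact ⟨N, fun i hi => by by_contra h; exact hi (hN i (by omega))⟩

lemma le_deg {f : InvLaurent L} {i : ℤ} (h : f.coeff i ≠ 0) : (i : WithBot ℤ) ≤ deg f := by
  have hf : f ≠ 0 := by
    intro h0; rw [h0] at h; exact h rfl
  rw [deg, if_neg hf]
  exact_mod_cast le_csSup (support_bddAbove f) h

lemma deg_neg (f : InvLaurent L) : deg (-f) = deg f := by
  unfold deg
  have h0 : -f = 0 ↔ f = 0 := by
    constructor
    · intro h; ext i
      have := congrArg (fun g => InvLaurent.coeff g i) h
      simp only [coeff_neg, coeff_zero, neg_eq_zero] at this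
      simpa using this
    · intro h; rw [h]; ext i; simp
  have hs : {i : ℤ | (-f).coeff i ≠ 0} = {i : ℤ | f.coeff i ≠ 0} := by
    ext i; simp
  rw [hs]
  by_cases h : f = 0
  · rw [if_pos (h0.mpr h), if_pos h]
  · rw [if_neg (fun hh => h (h0.mp hh)), if_neg h]

lemma deg_add_le (f g : InvLaurent L) : deg (f + g) ≤ max (deg f) (deg g) := by
  by_cases h : f + g = 0
  · rw [(deg_eq_bot_iff _).mpr h]; exact bot_le
  · rw [deg, if_neg h]
    have hne := support_nonempty h
    have : sSup {i : ℤ | (f + g).coeff i ≠ 0} ∈ {i : ℤ | (f + g).coeff i ≠ 0} := by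
      obtain ⟨N, hN⟩ := support_bddAbove (f + g)
      obtain ⟨m, hm, hmax⟩ := Int.exists_greatest_of_bdd ⟨N, fun i hi => hN hi⟩ hne
      have : sSup {i : ℤ | (f + g).coeff i ≠ 0} = m :=
        le_antisymm (csSup_le hne hmax) (le_csSup (support_bddAbove _) hm)
      rw [this]; exact hm
    set m := sSup {i : ℤ | (f + g).coeff i ≠ 0} with hm
    have hc : (f + g).coeff m ≠ 0 := this
    rw [coeff_add] at hc
    rcases (by by_contra hh; push_neg at hh; rw [hh.1, hh.2, add_zero] at hc; exact hc rfl :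
        f.coeff m ≠ 0 ∨ g.coeff m ≠ 0) with hf | hg
    · exact le_trans (le_deg hf) (le_max_left _ _)
    · exact le_trans (le_deg hg) (le_max_right _ _)

/-- real-exponential of a degree value: `e^d`, with `e^{-∞} = 0`. -/
def edeg : WithBot ℤ → ℝ
  | ⊥ => 0
  | (n : ℤ) => Real.exp n

lemma edeg_nonneg (d : WithBot ℤ) : 0 ≤ edeg d := by
  cases d with
  | bot => exact le_refl 0
  | coe n => exact le_of_lt (Real.exp_pos _)

lemma edeg_mono {d d' : WithBot ℤ} (h : d ≤ d') : edeg d ≤ edeg d' := by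
  cases d with
  | bot => exact edeg_nonneg d'
  | coe n =>
    cases d' with
    | bot => exact absurd h (by simp)
    | coe m =>
      have : n ≤ m := by exact_mod_cast h
      exact Real.exp_le_exp.mpr (by exact_mod_cast this)

lemma edeg_eq_zero_iff (d : WithBot ℤ) : edeg d = 0 ↔ d = ⊥ := by
  cases d with
  | bot => simp [edeg]
  | coe n =>
    simp only [edeg]
    constructor
    · intro h; exact absurd h (ne_of_gt (Real.exp_pos _))
    · intro h; exact absurd h (by simp)

noncomputable instance : MetricSpace (InvLaurent L) where
  dist f g := edeg (deg (f - g))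
  dist_self f := by
    show edeg (deg (f - f)) = 0
    rw [sub_self, (deg_eq_bot_iff (0 : InvLaurent L)).mpr rfl]
    rfl
  dist_comm f g := by
    show edeg (deg (f - g)) = edeg (deg (g - f))
    have h : g - f = -(f - g) := by abel
    rw [h, deg_neg]
  dist_triangle f g h := by
    show edeg (deg (f - h)) ≤ edeg (deg (f - g)) + edeg (deg (g - h))
    have h1 : f - h = (f - g) + (g - h) := by abel
    have h2 : deg (f - h) ≤ max (deg (f - g)) (deg (g - h)) := by
      rw [h1]; exact deg_add_le _ _
    calc edeg (deg (f - h)) ≤ edeg (max (deg (f - g)) (deg (g - h))) := edeg_mono h2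
      _ ≤ edeg (deg (f - g)) + edeg (deg (g - h)) := by
          rcases max_cases (deg (f - g)) (deg (g - h)) with ⟨hm, _⟩ | ⟨hm, _⟩ <;> rw [hm]
          · exact le_add_of_nonneg_right (edeg_nonneg _)
          · exact le_add_of_nonneg_left (edeg_nonneg _)
  eq_of_dist_eq_zero := by
    intro f g hd
    have hd' : edeg (deg (f - g)) = 0 := hd
    have : deg (f - g) = ⊥ := (edeg_eq_zero_iff _).mp hd'
    have := (deg_eq_bot_iff _).mp this
    exact sub_eq_zero.mp this

end InvLaurent

open InvLaurent

/-- A deformed Laurent series product on `L((T⁻¹))`: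
an associative, distributive, jointly continuous multiplication which restricts to left
scalar multiplication by `L`, satisfies `T^i · T^j = T^{i+j}`, and is compatible with the
standard degree map. -/
structure DeformedProduct (L : Type*) [Field L] where
  mul : InvLaurent L → InvLaurent L → InvLaurent L
  mul_assoc : ∀ f g h, mul (mul f g) h = mul f (mul g h)
  left_distrib : ∀ f g h, mul f (g + h) = mul f g + mul f h
  right_distrib : ∀ f g h, mul (f + g) h = mul f h + mul g h
  continuous_mul : Continuous fun p : InvLaurent L × InvLaurent L => mul p.1 p.2
  lsmul_eq : ∀ (b : L) (f : InvLaurent L), mul (single 0 b) f = lsmul b f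
  T_mul_T : ∀ i j : ℤ, mul (T L i) (T L j) = T L (i + j)
  deg_mul : ∀ f g, deg (mul f g) = deg f + deg g

/-- `HasDelta μ δ` says that `T · a = a T + Σ_{i ≤ 0} δ_i(a) T^i` for all `a ∈ L`. -/
def HasDelta {L : Type*} [Field L] (μ : DeformedProduct L) (δ : ℤ → L → L) : Prop :=
  ∀ (a : L) (i : ℤ), (μ.mul (T L 1) (single 0 a)).coeff i =
    if i = 1 then a else if i ≤ 0 then δ i a else 0

/-- Composition `δ_{j₁} ∘ ⋯ ∘ δ_{j_k}` along a list `[j₁, …, j_k]`. -/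
def dcomp {L : Type*} [Field L] (δ : ℤ → L → L) : List ℤ → L → L
  | [], a => a
  | j :: js, a => δ j (dcomp δ js a)

/-- The Leibniz-type identity (★) for the family `δ_i`, `i ≤ 0`. -/
def LeibnizStar {L : Type*} [Field L] (δ : ℤ → L → L) : Prop :=
  ∀ i : ℤ, i ≤ 0 → ∀ a b : L,
    δ i (a * b) = a * δ i b + δ i a * b +
      ∑ᶠ p : ℤ × List ℤ,
        if p.1 ≤ 0 ∧ p.2 ≠ [] ∧ (∀ j ∈ p.2, j ≤ 0) ∧
            p.2.sum - (p.2.length : ℤ) + p.1 = i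
        then zbinom p.1 p.2.length • (δ p.1 a * dcomp δ p.2 b) else 0

end

/-!
The norm `‖f‖ = e ^ deg f` induces the metric, is multiplicative by compatibility of the product
with the degree, and is complete, since the coefficients of a Cauchy sequence are eventually
constant. So `L((T⁻¹))` is a complete normed ring without zero divisors. A nonzero `z` of degree `n`
can be multiplied on the left by some `b⁻¹ T⁻ⁿ` to land in the open unit ball around `1`, where the
geometric series provides inverses; without zero divisors the resulting left inverse of `z` is
two-sided. Inversion is continuous at every unit of a complete normed ring.
-/

lemma isUnit_of_norm_one_sub_mul_lt_one {R : Type*} [NormedRing R] [HasSummableGeomSeries R]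
    [IsDedekindFiniteMonoid R] {x y : R} (h : ‖1 - x * y‖ < 1) : IsUnit y := by
  have hxy : IsUnit (x * y) := by
    simpa only [sub_sub_cancel] using isUnit_one_sub_of_norm_lt_one h
  exact isUnit_of_mul_isUnit_right hxy

namespace InvLaurent

lemma edeg_add (c d : WithBot ℤ) : edeg (c + d) = edeg c * edeg d := by
  cases c <;> cases d <;> simp [edeg, ← WithBot.coe_add, Real.exp_add]

lemma edeg_lt_exp_iff {d : WithBot ℤ} {n : ℤ} : edeg d < Real.exp n ↔ d < n := by
  cases d <;> simp [edeg, Real.exp_pos]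

variable {L : Type*} [Field L]

lemma deg_lt_iff {f : InvLaurent L} {n : ℤ} : deg f < n ↔ ∀ i, n ≤ i → f.coeff i = 0 := by
  refine ⟨fun hdeg i hi => ?_, fun hcoeff => ?_⟩
  · by_contra hne
    exact (le_deg hne).not_gt (hdeg.trans_le (WithBot.coe_le_coe.mpr hi))
  · by_cases hf : f = 0
    · simp [hf, deg]
    · have hmem := Int.csSup_mem (support_nonempty hf) (support_bddAbove f)
      rw [deg, if_neg hf, WithBot.coe_lt_coe]
      exact lt_of_not_ge fun hle => hmem (hcoeff _ hle)

lemma coeff_ne_zero_of_deg_eq {f : InvLaurent L} {n : ℤ} (h : deg f = n) : f.coeff n ≠ 0 := by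
  intro hn
  refine h.not_lt (deg_lt_iff.mpr fun i hi => ?_)
  rcases hi.eq_or_lt with rfl | hlt
  · exact hn
  · by_contra hne
    exact hlt.not_ge (WithBot.coe_le_coe.mp (h ▸ le_deg hne))

lemma coeff_T (n i : ℤ) : (T L n).coeff i = if i = n then 1 else 0 := rfl

lemma T_ne_zero (n : ℤ) : T L n ≠ 0 := fun h => by
  simpa [coeff_T] using congrArg (coeff · n) h

lemma deg_T (n : ℤ) : deg (T L n) = n := by
  simp [deg, T_ne_zero, coeff_T]

lemma dist_eq_edeg (f g : InvLaurent L) : dist f g = edeg (deg (f - g)) := rfl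

lemma dist_lt_exp_iff {f g : InvLaurent L} {n : ℤ} :
    dist f g < Real.exp n ↔ ∀ i, n ≤ i → f.coeff i = g.coeff i := by
  simp only [dist_eq_edeg, edeg_lt_exp_iff, deg_lt_iff, coeff_sub, sub_eq_zero]

/-- The coefficientwise limit of a sequence `u` whose `N`-th and later terms agree in degrees
`≥ -N`: its coefficient in degree `i` is read off the term of index `max (-i) 0`. -/
def diagLimit (u : ℕ → InvLaurent L) : InvLaurent L where
  coeff i := (u (-i).toNat).coeff i
  bdd' := by
    obtain ⟨N, hN⟩ := (u 0).bdd'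
    refine ⟨max N 0, fun i hi => ?_⟩
    rw [Int.toNat_of_nonpos (by omega)]
    exact hN i (by omega)

lemma dist_diagLimit_lt {u : ℕ → InvLaurent L}
    (hu : ∀ N n m : ℕ, N ≤ n → N ≤ m → dist (u n) (u m) < Real.exp (-N : ℤ)) (n : ℕ) :
    dist (u n) (diagLimit u) < Real.exp (-n : ℤ) := by
  refine dist_lt_exp_iff.mpr fun i hi => ?_
  have hle : (-i).toNat ≤ n := by omega
  exact dist_lt_exp_iff.mp (hu _ _ _ hle le_rfl) i (by omega)

instance : CompleteSpace (InvLaurent L) := by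
  refine Metric.complete_of_convergent_controlled_sequences (fun N => Real.exp (-N : ℤ))
    (fun N => Real.exp_pos _) fun u hu => ⟨diagLimit u, ?_⟩
  have hexp : Filter.Tendsto (fun n : ℕ => Real.exp (-n : ℤ)) Filter.atTop (nhds 0) := by
    push_cast
    exact Real.tendsto_exp_neg_atTop_nhds_zero.comp tendsto_natCast_atTop_atTop
  exact tendsto_iff_dist_tendsto_zero.mpr
    (squeeze_zero (fun _ => dist_nonneg) (fun n => (dist_diagLimit_lt hu n).le) hexp)

end InvLaurent

namespace DeformedProduct

open InvLaurent

variable {L : Type*} [Field L] (μ : DeformedProduct L)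

/-- The ring structure of `μ` before `T ^ 0` is known to be a right identity. -/
abbrev nonUnitalRing : NonUnitalRing (InvLaurent L) where
  mul := μ.mul
  left_distrib := μ.left_distrib
  right_distrib := μ.right_distrib
  zero_mul f := left_eq_add.mp (add_zero (0 : InvLaurent L) ▸ μ.right_distrib 0 0 f)
  mul_zero f := left_eq_add.mp (add_zero (0 : InvLaurent L) ▸ μ.left_distrib f 0 0)
  mul_assoc := μ.mul_assoc

lemma noZeroDivisors :
    letI := μ.nonUnitalRing
    NoZeroDivisors (InvLaurent L) := by
  let := μ.nonUnitalRing
  refine ⟨fun {f g} hfg => ?_⟩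
  have hdeg : deg f + deg g = ⊥ := by rw [← μ.deg_mul, deg_eq_bot_iff]; exact hfg
  simpa only [WithBot.add_eq_bot, deg_eq_bot_iff] using hdeg

lemma T_zero_mul (f : InvLaurent L) : μ.mul (T L 0) f = f :=
  (μ.lsmul_eq 1 f).trans (InvLaurent.ext fun _ => one_mul _)

lemma mul_T_zero (f : InvLaurent L) : μ.mul f (T L 0) = f := by
  let := μ.nonUnitalRing
  have := μ.noZeroDivisors
  have hidem : μ.mul (μ.mul f (T L 0)) (T L 0) = μ.mul f (T L 0) := by
    rw [μ.mul_assoc, μ.T_mul_T, add_zero]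
  exact mul_right_cancel₀ (T_ne_zero 0) hidem

/-- `L((T⁻¹))` with the product `μ` and the norm `e ^ deg`, whose metric is the given one. It is not
an instance because the product depends on `μ`. -/
noncomputable abbrev normedRing : NormedRing (InvLaurent L) where
  __ := μ.nonUnitalRing
  __ := (inferInstance : MetricSpace (InvLaurent L))
  one := T L 0
  one_mul := μ.T_zero_mul
  mul_one := μ.mul_T_zero
  norm f := edeg (deg f)
  dist_eq f g := by rw [dist_comm, dist_eq_edeg, neg_add_eq_sub]
  norm_mul_le f g := ((congrArg edeg (μ.deg_mul f g)).trans (edeg_add _ _)).le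

lemma exists_dist_T_zero_mul_lt_one {z : InvLaurent L} (hz : z ≠ 0) :
    ∃ v, dist (T L 0) (μ.mul v z) < 1 := by
  obtain ⟨n, hn⟩ := WithBot.ne_bot_iff_exists.mp ((deg_eq_bot_iff z).not.mpr hz)
  set y := μ.mul (T L (-n)) z
  have hdeg : deg y = (0 : ℤ) := by
    rw [μ.deg_mul, deg_T, ← hn, ← WithBot.coe_add, neg_add_cancel]
  have hlead : y.coeff 0 ≠ 0 := coeff_ne_zero_of_deg_eq hdeg
  refine ⟨μ.mul (single 0 (y.coeff 0)⁻¹) (T L (-n)), ?_⟩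
  rw [μ.mul_assoc, μ.lsmul_eq]
  suffices h : dist (T L 0) (lsmul (y.coeff 0)⁻¹ y) < Real.exp (0 : ℤ) by simpa using h
  refine dist_lt_exp_iff.mpr fun i hi => ?_
  change (T L 0).coeff i = (y.coeff 0)⁻¹ * y.coeff i
  rcases hi.eq_or_lt with rfl | hpos
  · rw [inv_mul_cancel₀ hlead, coeff_T, if_pos rfl]
  · have hdeg_lt : deg y < (1 : ℤ) := hdeg ▸ WithBot.coe_lt_coe.mpr zero_lt_one
    rw [deg_lt_iff.mp hdeg_lt i hpos, mul_zero, coeff_T, if_neg hpos.ne']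

lemma isUnit_of_ne_zero {z : InvLaurent L} (hz : z ≠ 0) :
    letI := μ.normedRing
    IsUnit z := by
  let := μ.normedRing
  have := μ.noZeroDivisors
  obtain ⟨v, hv⟩ := μ.exists_dist_T_zero_mul_lt_one hz
  exact isUnit_of_norm_one_sub_mul_lt_one ((dist_eq_norm_sub (1 : InvLaurent L) (v * z)) ▸ hv)

end DeformedProduct

open InvLaurent in
/-- for any deformed Laurent series product on `L((T⁻¹))`, every nonzero element
has a two-sided multiplicative inverse (the identity being `T^0 = 1`), and the inversion map
is continuous on the set of nonzero elements (w.r.t. the topology of the standard degree map). -/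
theorem deformedProduct_inv_exists_and_continuous (L : Type*) [Field L]
    (μ : DeformedProduct L) :
    ∃ inv : InvLaurent L → InvLaurent L,
      (∀ z : InvLaurent L, z ≠ 0 → μ.mul z (inv z) = T L 0 ∧ μ.mul (inv z) z = T L 0) ∧
      ContinuousOn inv {z : InvLaurent L | z ≠ 0} := by
  let := μ.normedRing
  refine ⟨Ring.inverse, fun z hz => ?_, fun z hz => ?_⟩
  · have hunit : IsUnit z := μ.isUnit_of_ne_zero hz
    exact ⟨Ring.mul_inverse_cancel z hunit, Ring.inverse_mul_cancel z hunit⟩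
  · obtain ⟨u, rfl⟩ := μ.isUnit_of_ne_zero hz
    exact (NormedRing.inverse_continuousAt u).continuousWithinAt
end

section
/- Let L be a field, let · be a deformed Laurent series product on L((T^{-1})), and suppose there are maps δ_i : L → L for i ∈ ℤ_{≤0} such that T·a = aT + Σ_{i≤0} δ_i(a)T^i for all a ∈ L. Then for every n ∈ ℤ and every a ∈ L: T^n · a = Σ_{k≥0} Σ_{(j_1,…,j_k)∈(ℤ_{≤0})^k} binom(n,k) δ_{j_1}⋯δ_{j_k}(a) T^{j_1+⋯+j_k−k+n}; that is, for each m ∈ ℤ the coefficient of T^m in T^n·a equals the sum of binom(n,k)·δ_{j_1}⋯δ_{j_k}(a) over all k ≥ 0 and all k-tuples of nonpositive integers (j_1,…,j_k) with j_1+⋯+j_k − k + n = m (a finite sum for each m since each summand requires j_1+⋯+j_k = m − n + k with all j_t ≤ 0). -/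
/-! Let `c_d(n)` be the coefficient of `T^(n-d)` in `T^n · a`. Comparing coefficients in
`T^(n+1) · a = T · (T^n · a)` gives `c_d(n+1) - c_d(n) = Σ_{j ≤ 0} δ_j(c_{d-1+j}(n))`: each forward
difference in `n` applies one `δ_j` and lowers `d` by at least one. Hence the `k`-th difference of
`c_d` vanishes for `k > d`, and Newton's forward difference expansion of `c_d` at `n = 0`, which is
valid on all of `ℤ`, is the claimed formula. -/

open InvLaurent

theorem zbinom_eq_choose (n : ℤ) (k : ℕ) : zbinom n k = Ring.choose n k := by
  unfold zbinom
  split_ifs with hn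
  · lift n to ℕ using hn
    simp [Ring.choose_natCast]
  · obtain ⟨m, rfl⟩ : ∃ m : ℕ, n = -(m + 1 : ℤ) := ⟨(-n - 1).toNat, by omega⟩
    have upper_eq : (m : ℤ) + 1 + k - 1 = (m + k : ℕ) := by push_cast; ring
    have toNat_eq : ((k : ℤ) - 1 - -(m + 1 : ℤ)).toNat = m + k := by omega
    rw [Ring.choose_neg, upper_eq, toNat_eq, Ring.choose_natCast]
    simp [Units.smul_def, Int.negOnePow_def]

section ForwardDifference

variable {A B : Type*} [AddCommGroup A] [AddCommGroup B]

theorem eq_of_fwdDiff_eq_of_apply_zero_eq {f g : ℤ → A} (hdiff : fwdDiff 1 f = fwdDiff 1 g)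
    (hzero : f 0 = g 0) : f = g := by
  have step (n : ℤ) : f (n + 1) - f n = g (n + 1) - g n := congrFun hdiff n
  funext n
  induction n using Int.induction_on with
  | zero => exact hzero
  | succ n ih => simpa [ih] using step n
  | pred n ih => simpa [ih] using step (-n - 1)

theorem fwdDiff_ringChoose_succ {R : Type*} [Ring R] [BinomialRing R] (k : ℕ) :
    fwdDiff 1 (fun r : R ↦ Ring.choose r (k + 1)) = fun r ↦ Ring.choose r k := by
  funext r
  rw [fwdDiff, Ring.choose_succ_succ, add_sub_cancel_right]

theorem eq_sum_ringChoose_smul_fwdDiff_iter {f : ℤ → A} {K : ℕ} (hf : (fwdDiff 1)^[K] f = 0) :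
    f = ∑ k ∈ Finset.range K, fun n ↦ Ring.choose n k • (fwdDiff 1)^[k] f 0 := by
  induction K generalizing f with
  | zero => simpa using hf
  | succ K ih =>
    have hdiff : fwdDiff 1 f =
        ∑ k ∈ Finset.range K, fun n ↦ Ring.choose n k • (fwdDiff 1)^[k + 1] f 0 := ih hf
    rw [Finset.sum_range_succ']
    refine eq_of_fwdDiff_eq_of_apply_zero_eq (hdiff.trans ?_) (by simp [Ring.choose_zero_succ])
    simp only [fwdDiff_add, fwdDiff_finsetSum, fwdDiff_smul_const, fwdDiff_ringChoose_succ,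
      Ring.choose_zero_right, fwdDiff_const]
    ext n
    simp

theorem fwdDiff_iter_addMonoidHom_comp {M : Type*} [AddCommMonoid M] (h : M) (φ : A →+ B)
    (f : M → A) (k : ℕ) : (fwdDiff h)^[k] (φ ∘ f) = φ ∘ (fwdDiff h)^[k] f := by
  have comp_fwdDiff : Function.Semiconj (φ ∘ ·) (fwdDiff h) (fwdDiff h) :=
    fun f ↦ funext fun x ↦ map_sub φ (f (x + h)) (f x)
  exact ((comp_fwdDiff.iterate_right k) f).symm

end ForwardDifference

/-- The index words `[j₁, …, j_k]` of length `k` with all `j_t ≤ 0` and `k - (j₁ + ⋯ + j_k) = d`,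
that is, those whose term in the expansion of `T^n · a` sits `d` places below the leading one. -/
noncomputable def deltaWords : ℕ → ℤ → Finset (List ℤ)
  | 0, d => if d = 0 then {[]} else ∅
  | k + 1, d =>
    ((Finset.Icc (1 - d) 0).sigma fun j ↦ deltaWords k (d - 1 + j)).map
      ⟨fun w ↦ w.1 :: w.2, by rintro ⟨_, _⟩ ⟨_, _⟩ h; simpa using h⟩

theorem cons_mem_deltaWords_succ {k : ℕ} {d j : ℤ} {js : List ℤ} :
    j :: js ∈ deltaWords (k + 1) d ↔ j ∈ Finset.Icc (1 - d) 0 ∧ js ∈ deltaWords k (d - 1 + j) := by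
  simp only [deltaWords, Finset.mem_map, Finset.mem_sigma]
  constructor
  · rintro ⟨⟨_, _⟩, hmem, heq⟩
    cases heq
    exact hmem
  · exact fun hmem ↦ ⟨⟨j, js⟩, hmem, rfl⟩

theorem list_sum_nonpos {M : Type*} [AddMonoid M] [Preorder M] [AddLeftMono M] [AddRightMono M]
    {l : List M} (hl : ∀ x ∈ l, x ≤ 0) : l.sum ≤ 0 := by
  simpa using List.sum_le_card_nsmul l 0 hl

theorem mem_deltaWords {k : ℕ} {d : ℤ} {js : List ℤ} :
    js ∈ deltaWords k d ↔
      js.length = k ∧ (∀ j ∈ js, j ≤ 0) ∧ (js.length : ℤ) - js.sum = d := by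
  induction k generalizing d js with
  | zero => cases js <;> by_cases hd : d = 0 <;> simp [deltaWords, hd, eq_comm]
  | succ k ih =>
    cases js with
    | nil => simp [deltaWords]
    | cons j js =>
      have sum_nonpos := list_sum_nonpos (l := js)
      rw [cons_mem_deltaWords_succ, ih, Finset.mem_Icc, List.forall_mem_cons, List.length_cons,
        List.sum_cons]
      grind

theorem sum_deltaWords_succ {A : Type*} [AddCommMonoid A] (F : List ℤ → A) (k : ℕ) (d : ℤ) :
    ∑ js ∈ deltaWords (k + 1) d, F js =
      ∑ j ∈ Finset.Icc (1 - d) 0, ∑ js ∈ deltaWords k (d - 1 + j), F (j :: js) := by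
  rw [deltaWords, Finset.sum_map, Finset.sum_sigma]
  rfl

theorem finsum_eq_sum_deltaWords {A : Type*} [AddCommMonoid A] (F : List ℤ → A) (d : ℤ) :
    (∑ᶠ js : List ℤ, if (∀ j ∈ js, j ≤ 0) ∧ (js.length : ℤ) - js.sum = d then F js else 0) =
      ∑ k ∈ Finset.range (d + 1).toNat, ∑ js ∈ deltaWords k d, F js := by
  have disjoint : Set.PairwiseDisjoint (Finset.range (d + 1).toNat) (deltaWords · d) :=
    fun k _ l _ hkl ↦ Finset.disjoint_left.mpr fun js hk hl ↦
      hkl ((mem_deltaWords.mp hk).1.symm.trans (mem_deltaWords.mp hl).1)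
  have mem_biUnion (js : List ℤ) : js ∈ (Finset.range (d + 1).toNat).biUnion (deltaWords · d) ↔
      (∀ j ∈ js, j ≤ 0) ∧ (js.length : ℤ) - js.sum = d := by
    simp only [Finset.mem_biUnion, Finset.mem_range, mem_deltaWords]
    constructor
    · rintro ⟨_, -, -, hjs⟩
      exact hjs
    · rintro ⟨hnonpos, hweight⟩
      have := list_sum_nonpos hnonpos
      exact ⟨js.length, by omega, rfl, hnonpos, hweight⟩
  simp only [← mem_biUnion]
  rw [← Finset.sum_biUnion disjoint, ← finsum_mem_finset_eq_sum]
  exact finsum_congr fun js ↦ (finsum_eq_if ..).symm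

namespace InvLaurent

variable {L : Type*} [Field L]

theorem deg_le_iff {f : InvLaurent L} {N : ℤ} :
    deg f ≤ N ↔ ∀ i, N < i → f.coeff i = 0 := by
  constructor
  · intro hf i hi
    by_contra hne
    exact hi.not_ge (WithBot.coe_le_coe.mp ((le_deg hne).trans hf))
  · intro hf
    unfold deg
    split_ifs with h0
    · exact bot_le
    · refine WithBot.coe_le_coe.mpr (csSup_le (support_nonempty h0) fun i hi ↦ ?_)
      exact le_of_not_gt fun hlt ↦ hi (hf i hlt)

theorem exists_deg_le (f : InvLaurent L) : ∃ N : ℤ, deg f ≤ N :=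
  f.bdd'.imp fun _ ↦ deg_le_iff.mpr

theorem coeff_single (n : ℤ) (a : L) (i : ℤ) :
    (single n a).coeff i = if i = n then a else 0 := by
  simp only [single]

theorem deg_single_le (n : ℤ) (a : L) : deg (single n a) ≤ n :=
  deg_le_iff.mpr fun i hi ↦ by rw [coeff_single, if_neg hi.ne']

/-- The `i`-th coefficient as an additive map. -/
def coeffHom (i : ℤ) : InvLaurent L →+ L where
  toFun f := f.coeff i
  map_zero' := rfl
  map_add' _ _ := rfl

/-- The inclusion `a ↦ a T^n` of the monomials of exponent `n` as an additive map. -/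
def singleHom (n : ℤ) : L →+ InvLaurent L where
  toFun := single n
  map_zero' := by ext i; simp [coeff_single]
  map_add' a b := by ext i; simp only [coeff_add, coeff_single]; split_ifs <;> simp

theorem map_eq_sum_map_single {A : Type*} [AddCommGroup A] {φ : InvLaurent L →+ A} {M : ℤ}
    (hφ : ∀ g, deg g ≤ M → φ g = 0) {f : InvLaurent L} {s : Finset ℤ}
    (hs : ∀ e, M < e → e ∉ s → f.coeff e = 0) :
    φ f = ∑ e ∈ s, φ (single e (f.coeff e)) := by
  rw [← map_sum, ← sub_eq_zero, ← map_sub]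
  refine hφ _ (deg_le_iff.mpr fun i hi ↦ ?_)
  have coeff_sum : (∑ e ∈ s, single e (f.coeff e)).coeff i = if i ∈ s then f.coeff i else 0 := by
    calc (∑ e ∈ s, single e (f.coeff e)).coeff i
        = ∑ e ∈ s, (single e (f.coeff e)).coeff i := map_sum (coeffHom i) _ _
      _ = if i ∈ s then f.coeff i else 0 := by simp [coeff_single]
  rw [coeff_sub, coeff_sum]
  split_ifs with his
  · exact sub_self _
  · rw [hs i hi his, sub_zero]

end InvLaurent

namespace DeformedProduct

variable {L : Type*} [Field L] (μ : DeformedProduct L)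

/-- Left multiplication `g ↦ f · g` as an additive map. -/
def mulLeftHom (f : InvLaurent L) : InvLaurent L →+ InvLaurent L :=
  AddMonoidHom.mk' (μ.mul f) (μ.left_distrib f)

/-- Right multiplication `g ↦ g · f` as an additive map. -/
def mulRightHom (f : InvLaurent L) : InvLaurent L →+ InvLaurent L :=
  AddMonoidHom.mk' (μ.mul · f) fun g h ↦ μ.right_distrib g h f

theorem coeff_mul_eq_zero {f g : InvLaurent L} {M N i : ℤ} (hf : deg f ≤ M) (hg : deg g ≤ N)
    (hi : M + N < i) : (μ.mul f g).coeff i = 0 := by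
  refine deg_le_iff.mp ?_ i hi
  rw [μ.deg_mul, WithBot.coe_add]
  exact add_le_add hf hg

theorem single_zero_mul_T (n : ℤ) (a : L) : μ.mul (single 0 a) (T L n) = single n a := by
  rw [μ.lsmul_eq]
  ext i
  simp [lsmul, T, coeff_single]

theorem single_mul_T (k n : ℤ) (a : L) : μ.mul (single k a) (T L n) = single (k + n) a := by
  rw [← single_zero_mul_T μ k, μ.mul_assoc, μ.T_mul_T, single_zero_mul_T]

theorem coeff_mul_T (f : InvLaurent L) (n i : ℤ) :
    (μ.mul f (T L n)).coeff i = f.coeff (i - n) := by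
  obtain ⟨N, hN⟩ := f.exists_deg_le
  let φ : InvLaurent L →+ L := (coeffHom i).comp (μ.mulRightHom (T L n))
  have φ_single (e : ℤ) (a : L) : φ (single e a) = if i - n = e then a else 0 := by
    change (μ.mul (single e a) (T L n)).coeff i = _
    simp only [single_mul_T, coeff_single, sub_eq_iff_eq_add]
  have φ_low (g : InvLaurent L) (hg : deg g ≤ (i - n - 1 : ℤ)) : φ g = 0 :=
    μ.coeff_mul_eq_zero hg (deg_single_le n 1) (by omega)
  change φ f = _
  rw [map_eq_sum_map_single φ_low (s := insert (i - n) (Finset.Icc (i - n) N))]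
  · simp [φ_single]
  · intro e he hes
    refine deg_le_iff.mp hN e ?_
    simp only [Finset.mem_insert, Finset.mem_Icc] at hes
    omega

/-- The map `δ_j` for `j ≤ 0`, read off from the product as the coefficient of `T^j` in `T · a`. -/
def delta (j : ℤ) : L →+ L :=
  ((coeffHom j).comp (μ.mulLeftHom (T L 1))).comp (singleHom 0)

/-- The coefficient of `T^(n - d)` in `T^n · a` as a function of `n`. The index `d` counts from the
leading term down, so that it does not move as `n` varies. -/
def subleadingCoeff (a : L) (d n : ℤ) : L :=
  (μ.mul (T L n) (single 0 a)).coeff (n - d)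

theorem deg_T_mul_single_zero_le (n : ℤ) (a : L) : deg (μ.mul (T L n) (single 0 a)) ≤ n :=
  deg_le_iff.mpr fun _ hi ↦
    μ.coeff_mul_eq_zero (deg_single_le n 1) (deg_single_le 0 a) (by simpa using hi)

theorem subleadingCoeff_of_neg (a : L) {d : ℤ} (hd : d < 0) : μ.subleadingCoeff a d = 0 :=
  funext fun n ↦ deg_le_iff.mp (μ.deg_T_mul_single_zero_le n a) _ (by omega)

theorem subleadingCoeff_apply_zero (a : L) (d : ℤ) :
    μ.subleadingCoeff a d 0 = if d = 0 then a else 0 := by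
  have one_mul : μ.mul (T L 0) (single 0 a) = single 0 a := by
    rw [T, μ.lsmul_eq]
    ext i
    exact one_mul _
  simp [subleadingCoeff, one_mul, coeff_single]

end DeformedProduct

namespace HasDelta

variable {L : Type*} [Field L] {μ : DeformedProduct L} {δ : ℤ → L → L}

theorem delta_apply (hδ : HasDelta μ δ) {j : ℤ} (hj : j ≤ 0) (a : L) :
    μ.delta j a = δ j a := by
  have := hδ a j
  rwa [if_neg (by omega), if_pos hj] at this

theorem coeff_T_one_mul_single (hδ : HasDelta μ δ) (e : ℤ) (a : L) (i : ℤ) :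
    (μ.mul (T L 1) (single e a)).coeff i =
      if i - e = 1 then a else if i - e ≤ 0 then δ (i - e) a else 0 := by
  rw [← μ.single_zero_mul_T, ← μ.mul_assoc, μ.coeff_mul_T, hδ]

theorem coeff_T_one_mul (hδ : HasDelta μ δ) {f : InvLaurent L} {N : ℤ} (hf : deg f ≤ N) (i : ℤ) :
    (μ.mul (T L 1) f).coeff i =
      f.coeff (i - 1) + ∑ j ∈ Finset.Icc (i - N) 0, δ j (f.coeff (i - j)) := by
  let φ : InvLaurent L →+ L := (coeffHom i).comp (μ.mulLeftHom (T L 1))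
  have φ_single (e : ℤ) (a : L) : φ (single e a) =
      if i - e = 1 then a else if i - e ≤ 0 then δ (i - e) a else 0 :=
    hδ.coeff_T_one_mul_single e a i
  have φ_low (g : InvLaurent L) (hg : deg g ≤ (i - 2 : ℤ)) : φ g = 0 :=
    μ.coeff_mul_eq_zero (deg_single_le 1 1) hg (by omega)
  have f_high (e : ℤ) (he : i - 2 < e) (hes : e ∉ insert (i - 1) (Finset.Icc i N)) :
      f.coeff e = 0 := by
    simp only [Finset.mem_insert, Finset.mem_Icc] at hes
    exact deg_le_iff.mp hf e (by omega)
  calc φ f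
      = ∑ e ∈ insert (i - 1) (Finset.Icc i N), φ (single e (f.coeff e)) :=
        map_eq_sum_map_single φ_low f_high
    _ = f.coeff (i - 1) + ∑ e ∈ Finset.Icc i N, φ (single e (f.coeff e)) := by
        rw [Finset.sum_insert (by simp), φ_single, if_pos (sub_sub_cancel i 1)]
    _ = f.coeff (i - 1) + ∑ j ∈ Finset.Icc (i - N) 0, δ j (f.coeff (i - j)) := by
        congr 1
        refine Finset.sum_equiv (Equiv.subLeft i) (fun e ↦ ?_) (fun e he ↦ ?_)
        · simp only [Finset.mem_Icc, Equiv.subLeft_apply]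
          omega
        · rw [Finset.mem_Icc] at he
          rw [φ_single, if_neg (by omega), if_pos (by omega), Equiv.subLeft_apply, sub_sub_cancel]

theorem fwdDiff_subleadingCoeff (hδ : HasDelta μ δ) (a : L) (d : ℤ) :
    fwdDiff 1 (μ.subleadingCoeff a d) =
      ∑ j ∈ Finset.Icc (1 - d) 0, μ.delta j ∘ μ.subleadingCoeff a (d - 1 + j) := by
  funext n
  have T_succ : μ.mul (T L (n + 1)) (single 0 a) = μ.mul (T L 1) (μ.mul (T L n) (single 0 a)) := by
    rw [← μ.mul_assoc, μ.T_mul_T, add_comm]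
  rw [fwdDiff, sub_eq_iff_eq_add', Finset.sum_apply, DeformedProduct.subleadingCoeff, T_succ,
    hδ.coeff_T_one_mul (μ.deg_T_mul_single_zero_le n a)]
  congr 1
  · rw [DeformedProduct.subleadingCoeff]
    congr 1
    ring
  · refine Finset.sum_congr (by congr 1; ring) fun j hj ↦ ?_
    rw [Function.comp_apply, hδ.delta_apply (Finset.mem_Icc.mp hj).2,
      DeformedProduct.subleadingCoeff]
    congr 2
    ring

theorem fwdDiff_iter_succ_subleadingCoeff (hδ : HasDelta μ δ) (a : L) (k : ℕ) (d : ℤ) :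
    (fwdDiff 1)^[k + 1] (μ.subleadingCoeff a d) =
      ∑ j ∈ Finset.Icc (1 - d) 0,
        μ.delta j ∘ (fwdDiff 1)^[k] (μ.subleadingCoeff a (d - 1 + j)) := by
  simp only [Function.iterate_succ_apply, hδ.fwdDiff_subleadingCoeff, fwdDiff_iter_finsetSum,
    fwdDiff_iter_addMonoidHom_comp]

theorem fwdDiff_iter_subleadingCoeff_eq_zero (hδ : HasDelta μ δ) (a : L) {k : ℕ} {d : ℤ}
    (hd : d < k) : (fwdDiff 1)^[k] (μ.subleadingCoeff a d) = 0 := by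
  induction k generalizing d with
  | zero => exact μ.subleadingCoeff_of_neg a hd
  | succ k ih =>
    rw [hδ.fwdDiff_iter_succ_subleadingCoeff]
    refine Finset.sum_eq_zero fun j hj ↦ ?_
    rw [Finset.mem_Icc] at hj
    rw [ih (by push_cast at hd; omega)]
    exact funext fun _ ↦ map_zero _

theorem fwdDiff_iter_subleadingCoeff_apply_zero (hδ : HasDelta μ δ) (a : L) (k : ℕ) (d : ℤ) :
    (fwdDiff 1)^[k] (μ.subleadingCoeff a d) 0 = ∑ js ∈ deltaWords k d, dcomp δ js a := by
  induction k generalizing d with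
  | zero =>
    rw [Function.iterate_zero_apply, μ.subleadingCoeff_apply_zero, deltaWords]
    split_ifs <;> simp [dcomp]
  | succ k ih =>
    rw [hδ.fwdDiff_iter_succ_subleadingCoeff, sum_deltaWords_succ, Finset.sum_apply]
    refine Finset.sum_congr rfl fun j hj ↦ ?_
    rw [Function.comp_apply, ih, map_sum]
    exact Finset.sum_congr rfl fun js _ ↦ hδ.delta_apply (Finset.mem_Icc.mp hj).2 _

theorem subleadingCoeff_eq_sum (hδ : HasDelta μ δ) (a : L) (d n : ℤ) :
    μ.subleadingCoeff a d n = ∑ k ∈ Finset.range (d + 1).toNat, ∑ js ∈ deltaWords k d,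
      zbinom n js.length • dcomp δ js a := by
  have vanishing := hδ.fwdDiff_iter_subleadingCoeff_eq_zero a (k := (d + 1).toNat) (d := d)
    (by omega)
  rw [congrFun (eq_sum_ringChoose_smul_fwdDiff_iter vanishing) n, Finset.sum_apply]
  refine Finset.sum_congr rfl fun k _ ↦ ?_
  rw [hδ.fwdDiff_iter_subleadingCoeff_apply_zero, Finset.smul_sum]
  refine Finset.sum_congr rfl fun js hjs ↦ ?_
  rw [zbinom_eq_choose, (mem_deltaWords.mp hjs).1]

end HasDelta

open InvLaurent in
/-- if `T·a = aT + Σ_{i≤0} δ_i(a)T^i` in a deformed Laurent series ring, then for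
every `n ∈ ℤ`, `a ∈ L` and `m ∈ ℤ`, the coefficient of `T^m` in `T^n · a` equals the (finitely
supported) sum of `binom(n,k)·δ_{j₁}⋯δ_{j_k}(a)` over all `k ≥ 0` and all `k`-tuples of
nonpositive integers `(j₁,…,j_k)` with `j₁+⋯+j_k − k + n = m`. -/
theorem deformedProduct_Tpow_mul_scalar (L : Type*) [Field L] (μ : DeformedProduct L)
    (δ : ℤ → L → L) (hδ : HasDelta μ δ) (n : ℤ) (a : L) (m : ℤ) :
    (μ.mul (T L n) (single 0 a)).coeff m =
      ∑ᶠ js : List ℤ,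
        if (∀ j ∈ js, j ≤ 0) ∧ js.sum - (js.length : ℤ) + n = m
        then zbinom n js.length • dcomp δ js a else 0 := by
  have coeff_eq : (μ.mul (T L n) (single 0 a)).coeff m = μ.subleadingCoeff a (n - m) n := by
    rw [DeformedProduct.subleadingCoeff, sub_sub_cancel]
  rw [coeff_eq, hδ.subleadingCoeff_eq_sum, ← finsum_eq_sum_deltaWords]
  have weight_iff (js : List ℤ) :
      (js.length : ℤ) - js.sum = n - m ↔ js.sum - (js.length : ℤ) + n = m := by omega
  simp only [weight_iff]
end

section
/- Let L be a field of characteristic 0, let · be a deformed Laurent series product on A = L((T^{-1})) satisfying T·a = aT + Σ_{i≤0} δ_i(a)T^i for all a ∈ L (with maps δ_i : L → L, i ≤ 0), and assume δ_i ≠ 0 for some i ≤ 0. Then the centralizer of L in A equals L, and the center of A equals ∩_{i≤0} Ker(δ_i), which is a field. -/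
/-!
For `a ∈ L` the commutator `D f = f a - a f` is a left `L`-linear derivation of `A`. If `D T` has
degree at most `1 - s`, the Leibniz rule shows that `D (T ^ n)` has degree at most `n - s`, so `D`
lowers degrees by `s`. Taking `s = 1`, which is the shape of `T · a` imposed by the `δ_i`, leading
coefficients are multiplicative. If `D T ≠ 0`, let `1 - s ≤ 0` be its degree and `d` its leading
coefficient: then `D (c T ^ n + ⋯) = n c d T ^ (n - s) + ⋯`, so in characteristic zero `D f = 0`
forces `f`, once its constant term is removed, to vanish. If `D T = 0`, then `D` lowers degrees by
every `s`, so `D = 0` and `a` is central.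
-/

theorem mul_lie {R : Type*} [NonUnitalRing R] (x y z : R) :
    ⁅x * y, z⁆ = x * ⁅y, z⁆ + ⁅x, z⁆ * y := by
  simp only [Ring.lie_def, mul_sub, sub_mul, mul_assoc]
  abel

theorem InvLaurent.deg_le_iff_s6 {L : Type*} [Field L] {f : InvLaurent L} {n : ℤ} :
    deg f ≤ n ↔ ∀ i, n < i → f.coeff i = 0 := by
  refine ⟨fun hf i hi => ?_, fun hf => ?_⟩
  · by_contra hne
    exact hi.not_ge (WithBot.coe_le_coe.1 ((le_deg hne).trans hf))
  · by_cases h0 : f = 0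
    · simp [deg, h0]
    · rw [deg, if_neg h0, WithBot.coe_le_coe]
      exact csSup_le (support_nonempty h0) fun i hi => not_lt.1 fun hlt => hi (hf i hlt)

namespace DeformedProduct

noncomputable section

attribute [local instance] LieRing.ofAssociativeRing

variable {L : Type*} [Field L]

/-- The ring `A`: inverse Laurent series with multiplication `μ`. This is a type synonym because
different products put different ring structures on the same additive group. -/
def Series (_μ : DeformedProduct L) : Type _ := InvLaurent L

variable (μ : DeformedProduct L)

instance : AddCommGroup μ.Series := inferInstanceAs (AddCommGroup (InvLaurent L))

instance : NonUnitalRing μ.Series where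
  mul := μ.mul
  mul_assoc := μ.mul_assoc
  left_distrib := μ.left_distrib
  right_distrib := μ.right_distrib
  mul_zero f := (AddMonoidHom.mk' (μ.mul f) (μ.left_distrib f)).map_zero
  zero_mul f := (AddMonoidHom.mk' (μ.mul · f) (μ.right_distrib · · f)).map_zero

instance : NoZeroDivisors μ.Series where
  eq_zero_or_eq_zero_of_mul_eq_zero {f g} hfg := by
    have hdeg : InvLaurent.deg f + InvLaurent.deg g = ⊥ :=
      (μ.deg_mul f g).symm.trans ((InvLaurent.deg_eq_bot_iff _).2 hfg)
    exact (WithBot.add_eq_bot.1 hdeg).imp (InvLaurent.deg_eq_bot_iff f).1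
      (InvLaurent.deg_eq_bot_iff g).1

/-- The `i`-th coefficient of a series in `A`, as an additive map. -/
def coeff (i : ℤ) : μ.Series →+ L where
  toFun f := InvLaurent.coeff f i
  map_zero' := rfl
  map_add' _ _ := rfl

/-- The monomial `T ^ n` as an element of `A`. -/
def T (n : ℤ) : μ.Series := InvLaurent.T L n

variable {μ}

@[ext]
theorem Series.ext {f g : μ.Series} (h : ∀ i, μ.coeff i f = μ.coeff i g) : f = g :=
  InvLaurent.ext h

theorem coeff_T (n i : ℤ) : μ.coeff i (μ.T n) = if i = n then 1 else 0 := rfl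

theorem T_zero_mul_s6 (f : μ.Series) : μ.T 0 * f = f :=
  Series.ext fun i => (congrArg (μ.coeff i) (μ.lsmul_eq 1 f)).trans (one_mul (μ.coeff i f))

theorem T_ne_zero (n : ℤ) : μ.T n ≠ 0 := fun h => by
  simpa [coeff_T] using congrArg (μ.coeff n) h

-- `T ^ 0` is a left unit by left `L`-linearity; since `A` is a domain, it is also a right unit.
theorem mul_T_zero_s6 (f : μ.Series) : f * μ.T 0 = f := by
  refine sub_eq_zero.1 ((mul_eq_zero.1 ?_).resolve_right (T_ne_zero (μ := μ) 0))
  rw [sub_mul, _root_.mul_assoc, T_zero_mul_s6, sub_self]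

instance : Ring μ.Series where
  __ : NonUnitalRing μ.Series := inferInstance
  one := μ.T 0
  one_mul := T_zero_mul_s6
  mul_one := mul_T_zero_s6

variable (μ) in
/-- The inclusion of `L` into `A` as the series supported in degree `0`. -/
def C : L →+* μ.Series where
  toFun b := InvLaurent.single 0 b
  map_one' := rfl
  map_mul' a _ := ((μ.lsmul_eq a _).trans (InvLaurent.ext fun _ => mul_ite_zero ..)).symm
  map_zero' := InvLaurent.ext fun _ => ite_self 0
  map_add' _ _ := InvLaurent.ext fun _ => ite_add_zero

theorem T_zero : μ.T 0 = 1 := rfl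

theorem T_add (m n : ℤ) : μ.T (m + n) = μ.T m * μ.T n := (μ.T_mul_T m n).symm

theorem coeff_C_mul (b : L) (f : μ.Series) (i : ℤ) :
    μ.coeff i (μ.C b * f) = b * μ.coeff i f :=
  congrArg (μ.coeff i) (μ.lsmul_eq b f)

theorem coeff_C (b : L) (i : ℤ) : μ.coeff i (μ.C b) = if i = 0 then b else 0 := rfl

theorem lie_C_C (a b : L) : ⁅μ.C a, μ.C b⁆ = 0 :=
  ((Commute.all a b).map μ.C).lie_eq

theorem lie_C_mul_C (a b : L) (f : μ.Series) :
    ⁅μ.C b * f, μ.C a⁆ = μ.C b * ⁅f, μ.C a⁆ := by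
  rw [mul_lie, lie_C_C, zero_mul, add_zero]

variable (μ) in
/-- The series of degree at most `n`, a step of the degree filtration of `A`. -/
def degLE (n : ℤ) : AddSubgroup μ.Series where
  carrier := {f | ∀ i, n < i → μ.coeff i f = 0}
  zero_mem' i _ := map_zero (μ.coeff i)
  add_mem' hf hg i hi := by rw [map_add, hf i hi, hg i hi, add_zero]
  neg_mem' hf i hi := by rw [map_neg, hf i hi, neg_zero]

theorem degLE_mono : Monotone μ.degLE := fun _ _ hmn _ hf i hi => hf i (hmn.trans_lt hi)

theorem T_mem_degLE (n : ℤ) : μ.T n ∈ μ.degLE n := fun _ hi => if_neg hi.ne'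

theorem C_mem_degLE (b : L) : μ.C b ∈ μ.degLE 0 := fun _ hi => if_neg hi.ne'

theorem mul_mem_degLE {m n : ℤ} {f g : μ.Series} (hf : f ∈ μ.degLE m) (hg : g ∈ μ.degLE n) :
    f * g ∈ μ.degLE (m + n) :=
  InvLaurent.deg_le_iff_s6.1 <| (μ.deg_mul f g).trans_le <|
    add_le_add (InvLaurent.deg_le_iff_s6.2 hf) (InvLaurent.deg_le_iff_s6.2 hg)

theorem C_mul_mem_degLE {n : ℤ} {f : μ.Series} (b : L) (hf : f ∈ μ.degLE n) :
    μ.C b * f ∈ μ.degLE n := by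
  simpa using mul_mem_degLE (C_mem_degLE b) hf

theorem lie_C_mem_degLE {n : ℤ} {f : μ.Series} (a : L) (hf : f ∈ μ.degLE n) :
    ⁅f, μ.C a⁆ ∈ μ.degLE n :=
  sub_mem (by simpa using mul_mem_degLE hf (C_mem_degLE a)) (C_mul_mem_degLE a hf)

theorem exists_mem_degLE (f : μ.Series) : ∃ n, f ∈ μ.degLE n := InvLaurent.bdd' f

theorem eq_zero_of_forall_mem_degLE {f : μ.Series} (hf : ∀ n, f ∈ μ.degLE n) : f = 0 :=
  Series.ext fun i => hf (i - 1) i (sub_one_lt i)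

theorem exists_mem_degLE_coeff_ne_zero {f : μ.Series} (hf : f ≠ 0) :
    ∃ n, f ∈ μ.degLE n ∧ μ.coeff n f ≠ 0 :=
  have hbdd := InvLaurent.support_bddAbove f
  ⟨_, fun _ hi => not_not.1 (notMem_of_csSup_lt hi hbdd),
    Int.csSup_mem (InvLaurent.support_nonempty hf) hbdd⟩

theorem sub_leading_mem_degLE {n : ℤ} {f : μ.Series} (hf : f ∈ μ.degLE n) :
    f - μ.C (μ.coeff n f) * μ.T n ∈ μ.degLE (n - 1) := by
  intro i hi
  rw [map_sub, coeff_C_mul, coeff_T]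
  split_ifs with hin
  · rw [hin, mul_one, sub_self]
  · rw [hf i (by omega), mul_zero, sub_zero]

theorem coeff_eq_of_sub_mem_degLE {n : ℤ} {f g : μ.Series} (h : f - g ∈ μ.degLE (n - 1)) :
    μ.coeff n f = μ.coeff n g := by
  simpa [sub_eq_zero] using h n (sub_one_lt n)

section DegreeDrop

variable {a : L} {s : ℕ}

theorem lie_T_neg (a : L) (n : ℤ) :
    ⁅μ.T (-n), μ.C a⁆ = -(μ.T (-n) * ⁅μ.T n, μ.C a⁆ * μ.T (-n)) := by
  have hleibniz : μ.T n * ⁅μ.T (-n), μ.C a⁆ + ⁅μ.T n, μ.C a⁆ * μ.T (-n) = 0 := by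
    rw [← mul_lie, ← T_add, add_neg_cancel, T_zero, ← map_one μ.C, lie_C_C]
  calc ⁅μ.T (-n), μ.C a⁆ = μ.T (-n) * (μ.T n * ⁅μ.T (-n), μ.C a⁆) := by
        rw [← _root_.mul_assoc, ← T_add, neg_add_cancel, T_zero, one_mul]
    _ = -(μ.T (-n) * ⁅μ.T n, μ.C a⁆ * μ.T (-n)) := by
        rw [eq_neg_of_add_eq_zero_left hleibniz, mul_neg, _root_.mul_assoc]

theorem lie_T_mem_degLE (ha : ⁅μ.T 1, μ.C a⁆ ∈ μ.degLE (1 - s)) (n : ℤ) :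
    ⁅μ.T n, μ.C a⁆ ∈ μ.degLE (n - s) := by
  let exponents : AddSubgroup ℤ :=
    { carrier := {n | ⁅μ.T n, μ.C a⁆ ∈ μ.degLE (n - s)}
      zero_mem' := by
        rw [Set.mem_ofPred_eq, T_zero, ← map_one μ.C, lie_C_C]
        exact zero_mem _
      add_mem' := fun {m n} hm hn => by
        rw [Set.mem_ofPred_eq, T_add, mul_lie]
        refine add_mem ?_ ?_
        · simpa only [add_sub_assoc] using mul_mem_degLE (T_mem_degLE m) hn
        · simpa only [sub_add_eq_add_sub] using mul_mem_degLE hm (T_mem_degLE n)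
      neg_mem' := fun {n} hn => by
        rw [Set.mem_ofPred_eq, lie_T_neg]
        refine neg_mem (degLE_mono (le_of_eq ?_)
          (mul_mem_degLE (mul_mem_degLE (T_mem_degLE (-n)) hn) (T_mem_degLE (-n))))
        ring }
  have hone : (1 : ℤ) ∈ exponents := ha
  have hmem : n ∈ exponents := by simpa using zsmul_mem hone n
  exact hmem

theorem lie_mem_degLE_sub (ha : ⁅μ.T 1, μ.C a⁆ ∈ μ.degLE (1 - s)) {n : ℤ} {f : μ.Series}
    (hf : f ∈ μ.degLE n) : ⁅f, μ.C a⁆ ∈ μ.degLE (n - s) := by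
  induction s generalizing n f with
  | zero => simpa using lie_C_mem_degLE a hf
  | succ s ih =>
    have hlead := C_mul_mem_degLE (μ.coeff n f) (lie_T_mem_degLE ha n)
    have htail := ih (degLE_mono (by push_cast; omega) ha) (sub_leading_mem_degLE hf)
    rw [sub_lie, lie_C_mul_C] at htail
    have hsum := add_mem (degLE_mono (by push_cast; omega) htail) hlead
    rwa [sub_add_cancel] at hsum

theorem lie_eq_zero_of_lie_T_one_eq_zero (ha : ⁅μ.T 1, μ.C a⁆ = 0) (f : μ.Series) :
    ⁅f, μ.C a⁆ = 0 := by
  obtain ⟨n, hf⟩ := exists_mem_degLE f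
  refine eq_zero_of_forall_mem_degLE fun m => ?_
  have hdrop : ⁅f, μ.C a⁆ ∈ μ.degLE (n - (n - m).toNat) :=
    lie_mem_degLE_sub (ha ▸ zero_mem _) hf
  exact degLE_mono (by omega) hdrop

end DegreeDrop

section LeadingCoefficient

theorem coeff_mul_of_mem_degLE (hT : ∀ b, ⁅μ.T 1, μ.C b⁆ ∈ μ.degLE 0) {m n : ℤ}
    {f g : μ.Series} (hf : f ∈ μ.degLE m) (hg : g ∈ μ.degLE n) :
    μ.coeff (m + n) (f * g) = μ.coeff m f * μ.coeff n g := by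
  set b := μ.coeff m f
  set c := μ.coeff n g
  have hlie : ⁅μ.T m, μ.C c⁆ ∈ μ.degLE (m - 1) := by
    simpa using lie_T_mem_degLE (s := 1) (by simpa using hT c) m
  have hsplit : f * g - μ.C (b * c) * μ.T (m + n) =
      (f - μ.C b * μ.T m) * g + μ.C b * (μ.T m * (g - μ.C c * μ.T n)) +
        μ.C b * (⁅μ.T m, μ.C c⁆ * μ.T n) := by
    rw [map_mul, T_add, Ring.lie_def]
    noncomm_ring
  have hmem : f * g - μ.C (b * c) * μ.T (m + n) ∈ μ.degLE (m + n - 1) := by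
    rw [hsplit]
    refine add_mem (add_mem ?_ (C_mul_mem_degLE b ?_)) (C_mul_mem_degLE b ?_)
    · simpa only [sub_add_eq_add_sub] using mul_mem_degLE (sub_leading_mem_degLE hf) hg
    · simpa only [add_sub_assoc] using mul_mem_degLE (T_mem_degLE m) (sub_leading_mem_degLE hg)
    · simpa only [sub_add_eq_add_sub] using mul_mem_degLE hlie (T_mem_degLE n)
  rw [coeff_eq_of_sub_mem_degLE hmem, coeff_C_mul, coeff_T, if_pos rfl, mul_one]

variable {a : L} {s : ℕ}

theorem coeff_lie_T (hT : ∀ b, ⁅μ.T 1, μ.C b⁆ ∈ μ.degLE 0)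
    (ha : ⁅μ.T 1, μ.C a⁆ ∈ μ.degLE (1 - s)) (n : ℤ) :
    μ.coeff (n - s) ⁅μ.T n, μ.C a⁆ = n * μ.coeff (1 - s) ⁅μ.T 1, μ.C a⁆ := by
  let leading : ℤ →+ L := AddMonoidHom.mk' (fun n => μ.coeff (n - s) ⁅μ.T n, μ.C a⁆) fun m n => by
    have hleft := coeff_mul_of_mem_degLE hT (T_mem_degLE m) (lie_T_mem_degLE ha n)
    have hright := coeff_mul_of_mem_degLE hT (lie_T_mem_degLE ha m) (T_mem_degLE n)
    rw [coeff_T, if_pos rfl, one_mul, ← add_sub_assoc] at hleft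
    rw [coeff_T, if_pos rfl, mul_one, sub_add_eq_add_sub] at hright
    rw [T_add, mul_lie, map_add, hleft, hright, add_comm]
  have hleading : leading n = n * leading 1 := by simpa using map_zsmul leading n 1
  exact hleading

theorem coeff_lie_of_mem_degLE (hT : ∀ b, ⁅μ.T 1, μ.C b⁆ ∈ μ.degLE 0)
    (ha : ⁅μ.T 1, μ.C a⁆ ∈ μ.degLE (1 - s)) {n : ℤ} {f : μ.Series} (hf : f ∈ μ.degLE n) :
    μ.coeff (n - s) ⁅f, μ.C a⁆ = μ.coeff n f * (n * μ.coeff (1 - s) ⁅μ.T 1, μ.C a⁆) := by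
  have htail := lie_mem_degLE_sub ha (sub_leading_mem_degLE hf)
  rw [sub_lie, lie_C_mul_C, sub_right_comm] at htail
  rw [coeff_eq_of_sub_mem_degLE htail, coeff_C_mul, coeff_lie_T hT ha]

theorem eq_C_of_lie_eq_zero [CharZero L] (hT : ∀ b, ⁅μ.T 1, μ.C b⁆ ∈ μ.degLE 0)
    (ha : ⁅μ.T 1, μ.C a⁆ ≠ 0) {f : μ.Series} (hf : ⁅f, μ.C a⁆ = 0) :
    f = μ.C (μ.coeff 0 f) := by
  by_contra hne
  obtain ⟨n, hn, hcoeff⟩ := exists_mem_degLE_coeff_ne_zero (sub_ne_zero.2 hne)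
  have hn0 : n ≠ 0 := by
    rintro rfl
    simp [coeff_C] at hcoeff
  obtain ⟨m, hm, hlead⟩ := exists_mem_degLE_coeff_ne_zero ha
  have hm0 : m ≤ 0 := not_lt.1 fun hpos => hlead (hT a m hpos)
  obtain ⟨s, rfl⟩ : ∃ s : ℕ, m = 1 - s := ⟨(1 - m).toNat, by omega⟩
  have hzero := coeff_lie_of_mem_degLE hT hm hn
  rw [sub_lie, hf, lie_C_C, sub_zero, map_zero] at hzero
  exact mul_ne_zero hcoeff (mul_ne_zero (Int.cast_ne_zero.2 hn0) hlead) hzero.symm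

end LeadingCoefficient

variable (μ) in
/-- The field of constants: the elements of `L` that commute with `T`. -/
def constants : Subfield L where
  __ := (Subring.centralizer {μ.T 1}).comap μ.C
  inv_mem' b hb := by
    have hcomm : Commute (μ.T 1) (μ.C b) := hb _ rfl
    rcases eq_or_ne b 0 with rfl | hb0
    · simp
    · rintro _ rfl
      exact hcomm.units_inv_right (u := Units.map μ.C.toMonoidHom (Units.mk0 b hb0))

theorem mem_constants_iff_lie_eq_zero {b : L} :
    b ∈ μ.constants ↔ ⁅μ.T 1, μ.C b⁆ = 0 := by
  rw [← commute_iff_lie_eq]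
  exact ⟨fun h => h _ rfl, by rintro h _ rfl; exact h⟩

theorem C_mem_center_iff {b : L} : μ.C b ∈ Set.center μ.Series ↔ b ∈ μ.constants := by
  rw [Semigroup.mem_center_iff, mem_constants_iff_lie_eq_zero]
  exact ⟨fun h => Commute.lie_eq (h _),
    fun h f => commute_iff_lie_eq.2 (lie_eq_zero_of_lie_T_one_eq_zero h f)⟩

theorem mem_centralizer_range_C_iff {f : μ.Series} :
    f ∈ Set.centralizer (Set.range μ.C) ↔ ∀ b, μ.C b * f = f * μ.C b :=
  Set.forall_mem_range

section HasDelta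

variable {δ : ℤ → L → L}

theorem coeff_lie_T_one (hδ : HasDelta μ δ) (a : L) (i : ℤ) :
    μ.coeff i ⁅μ.T 1, μ.C a⁆ = if i ≤ 0 then δ i a else 0 := by
  have hmul : μ.coeff i (μ.T 1 * μ.C a) = if i = 1 then a else if i ≤ 0 then δ i a else 0 := hδ a i
  rw [Ring.lie_def, map_sub, hmul, coeff_C_mul, coeff_T]
  split_ifs <;> first | omega | simp

theorem lie_T_one_mem_degLE_zero (hδ : HasDelta μ δ) (a : L) :
    ⁅μ.T 1, μ.C a⁆ ∈ μ.degLE 0 := fun i hi => by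
  rw [coeff_lie_T_one hδ, if_neg hi.not_ge]

theorem mem_constants_iff (hδ : HasDelta μ δ) {b : L} :
    b ∈ μ.constants ↔ ∀ i ≤ 0, δ i b = 0 := by
  rw [mem_constants_iff_lie_eq_zero]
  constructor
  · intro h i hi
    simpa [h, hi] using (coeff_lie_T_one hδ b i).symm
  · intro h
    ext i
    rw [coeff_lie_T_one hδ, map_zero, ite_eq_right_iff]
    exact h i

variable [CharZero L]

theorem centralizer_range_C (hδ : HasDelta μ δ) (hne : ∃ i ≤ 0, ∃ a, δ i a ≠ 0) :
    Set.centralizer (Set.range μ.C) = Set.range μ.C := by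
  obtain ⟨i, hi, a, ha⟩ := hne
  have hlie : ⁅μ.T 1, μ.C a⁆ ≠ 0 := fun h =>
    ha ((mem_constants_iff hδ).1 (mem_constants_iff_lie_eq_zero.2 h) i hi)
  apply Set.Subset.antisymm
  · intro f hf
    have hcomm : Commute (μ.C a) f := hf _ ⟨a, rfl⟩
    exact ⟨_, (eq_C_of_lie_eq_zero (lie_T_one_mem_degLE_zero hδ) hlie hcomm.symm.lie_eq).symm⟩
  · rintro _ ⟨b, rfl⟩ _ ⟨c, rfl⟩
    exact (Commute.all c b).map μ.C

theorem center_eq_image_constants (hδ : HasDelta μ δ) (hne : ∃ i ≤ 0, ∃ a, δ i a ≠ 0) :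
    Set.center μ.Series = μ.C '' μ.constants := by
  apply Set.Subset.antisymm
  · intro f hf
    obtain ⟨b, rfl⟩ : f ∈ Set.range μ.C :=
      centralizer_range_C hδ hne ▸ Set.center_subset_centralizer _ hf
    exact ⟨b, C_mem_center_iff.1 hf, rfl⟩
  · rintro _ ⟨b, hb, rfl⟩
    exact C_mem_center_iff.2 hb

end HasDelta

end

end DeformedProduct

open InvLaurent in
/-- let `L` have characteristic `0`, let `·` be a deformed Laurent series product
on `A = L((T⁻¹))` with `T·a = aT + Σ_{i≤0} δ_i(a)T^i`, and suppose some `δ_i ≠ 0` (`i ≤ 0`).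
Then the centralizer of `L` in `A` is `L`, and the center of `A` is `∩_{i≤0} Ker δ_i`,
which is a field (a subfield of `L`). -/
theorem deformedProduct_centralizer_and_center (L : Type*) [Field L] [CharZero L]
    (μ : DeformedProduct L) (δ : ℤ → L → L) (hδ : HasDelta μ δ)
    (hne : ∃ i : ℤ, i ≤ 0 ∧ ∃ a : L, δ i a ≠ 0) :
    {w : InvLaurent L | ∀ b : L, μ.mul (single 0 b) w = μ.mul w (single 0 b)} =
      Set.range (fun b : L => single 0 b) ∧
    {w : InvLaurent L | ∀ z : InvLaurent L, μ.mul z w = μ.mul w z} =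
      (fun b : L => single 0 b) '' {b : L | ∀ i : ℤ, i ≤ 0 → δ i b = 0} ∧
    ∃ F : Subfield L, (F : Set L) = {b : L | ∀ i : ℤ, i ≤ 0 → δ i b = 0} := by
  have hconst : (μ.constants : Set L) = {b | ∀ i ≤ 0, δ i b = 0} :=
    Set.ext fun _ => DeformedProduct.mem_constants_iff hδ
  refine ⟨?_, ?_, μ.constants, hconst⟩
  · refine Eq.trans ?_ (DeformedProduct.centralizer_range_C hδ hne)
    exact Set.ext fun _ => DeformedProduct.mem_centralizer_range_C_iff.symm
  · rw [← hconst]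
    refine Eq.trans ?_ (DeformedProduct.center_eq_image_constants hδ hne)
    exact Set.ext fun _ => (Semigroup.mem_center_iff (M := μ.Series)).symm
end
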